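/- Kallin's Lemma: Let K₁ and K₂ be polynomially convex compact subsets of ℂⁿ, and let p be a holomorphic polynomial on ℂⁿ mapping K₁ onto F₁ and K₂ onto F₂, where F₁ and F₂ are polynomially convex compact subsets of ℂ such that F₁ ∩ F₂ = {0} and 0 is a boundary point of both F₁ and F₂. If p⁻¹(0) ∩ (K₁ ∪ K₂) is polynomially convex, then K₁ ∪ K₂ is polynomially convex. -/

import Mathlib

open Set Filter Topology

noncomputable section

/-- Evaluation of a multivariate polynomial as a function on `ℂⁿ = Fin n → ℂ`. -/
def mvEval {n : ℕ} (p : MvPolynomial (Fin n) ℂ) : (Fin n → ℂ) → ℂ :=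
  fun z => MvPolynomial.eval z p

/-- The polynomially convex hull of a set in `ℂⁿ`. -/
def polyHull {n : ℕ} (K : Set (Fin n → ℂ)) : Set (Fin n → ℂ) :=
  {z | ∀ p : MvPolynomial (Fin n) ℂ, ‖mvEval p z‖ ≤ sSup ((fun w => ‖mvEval p w‖) '' K)}

/-- A set in `ℂⁿ` is polynomially convex if it equals its polynomially convex hull. -/
def IsPolyConvex {n : ℕ} (K : Set (Fin n → ℂ)) : Prop := polyHull K = K

/-- The polynomially convex hull of a subset of `ℂ`. -/
def polyHull1 (F : Set ℂ) : Set ℂ :=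
  {z | ∀ p : Polynomial ℂ, ‖p.eval z‖ ≤ sSup ((fun w => ‖p.eval w‖) '' F)}

/-- A subset of `ℂ` is polynomially convex if it equals its polynomially convex hull. -/
def IsPolyConvex1 (F : Set ℂ) : Prop := polyHull1 F = F

/-- Partial derivative in the `i`-th coordinate direction. -/
def pd {n : ℕ} (i : Fin n) (f : (Fin n → ℂ) → ℂ) : (Fin n → ℂ) → ℂ :=
  fun z => fderiv ℂ f z (Pi.single i 1)

/-- Iterated partial derivative `D^ℓ = ∂^{ℓ₁+⋯+ℓₙ}/∂z₁^{ℓ₁}⋯∂zₙ^{ℓₙ}`. -/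
def Dml {n : ℕ} (ℓ : Fin n → ℕ) (f : (Fin n → ℂ) → ℂ) : (Fin n → ℂ) → ℂ :=
  (List.finRange n).foldr (fun i g => (pd i)^[ℓ i] g) f

/-- Partial sums `S_λ` of a Taylor-type series around `ζ`, with coefficients computed from a
given family `g` of (extended) partial derivatives: the coefficient of the monomial
`(z-ζ)^{N_j}` is `g (N_j) ζ / (N_{j,1}! ⋯ N_{j,n}!)`. -/
def pSumExt {n : ℕ} (Nj : ℕ → Fin n → ℕ) (g : (Fin n → ℕ) → (Fin n → ℂ) → ℂ)
    (ζ : Fin n → ℂ) (lam : ℕ) : (Fin n → ℂ) → ℂ :=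
  fun z => ∑ j ∈ Finset.range (lam + 1),
    (((∏ i, Nat.factorial (Nj j i) : ℕ) : ℂ))⁻¹ * g (Nj j) ζ * ∏ i, (z i - ζ i) ^ (Nj j i)

/-- Partial sums `S_λ(f,ζ)` of the Taylor development of `f` around `ζ`. -/
def pSum {n : ℕ} (Nj : ℕ → Fin n → ℕ) (f : (Fin n → ℂ) → ℂ)
    (ζ : Fin n → ℂ) (lam : ℕ) : (Fin n → ℂ) → ℂ :=
  pSumExt Nj (fun ℓ => Dml ℓ f) ζ lam

/-- The space `O(Ω)` of holomorphic functions on `Ω`. -/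
def Ospace (n : ℕ) (Ω : Set (Fin n → ℂ)) : Type :=
  {f : (Fin n → ℂ) → ℂ // DifferentiableOn ℂ f Ω}

/-- Topology of uniform convergence on compact subsets of `Ω` on `O(Ω)` (the compact-open
topology induced via restriction to `Ω`). -/
instance (n : ℕ) (Ω : Set (Fin n → ℂ)) : TopologicalSpace (Ospace n Ω) :=
  TopologicalSpace.induced
    (fun f : Ospace n Ω =>
      (⟨Ω.restrict f.1, continuousOn_iff_continuous_restrict.mp f.2.continuousOn⟩ : C(Ω, ℂ)))
    inferInstance

/-- Membership in `A^∞(Ω)`: `f` is holomorphic on `Ω` and each partial derivative `D^ℓ f`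
extends continuously to the closure of `Ω`. -/
def AinfMem (n : ℕ) (Ω : Set (Fin n → ℂ)) (f : (Fin n → ℂ) → ℂ) : Prop :=
  DifferentiableOn ℂ f Ω ∧
    ∀ ℓ : Fin n → ℕ, ∃ g : (Fin n → ℂ) → ℂ,
      ContinuousOn g (closure Ω) ∧ Set.EqOn g (Dml ℓ f) Ω

/-- The space `A^∞(Ω)`. -/
def AinfSpace (n : ℕ) (Ω : Set (Fin n → ℂ)) : Type :=
  {f : (Fin n → ℂ) → ℂ // AinfMem n Ω f}

/-- The chosen continuous extension of `D^ℓ f` to the closure of `Ω`, for `f ∈ A^∞(Ω)`.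
(Its restriction to the closure of `Ω` is uniquely determined.) -/
def AinfExt {n : ℕ} {Ω : Set (Fin n → ℂ)} (f : AinfSpace n Ω) (ℓ : Fin n → ℕ) :
    (Fin n → ℂ) → ℂ :=
  Classical.choose (f.2.2 ℓ)

lemma AinfExt_continuousOn {n : ℕ} {Ω : Set (Fin n → ℂ)} (f : AinfSpace n Ω) (ℓ : Fin n → ℕ) :
    ContinuousOn (AinfExt f ℓ) (closure Ω) :=
  (Classical.choose_spec (f.2.2 ℓ)).1

lemma AinfExt_eqOn {n : ℕ} {Ω : Set (Fin n → ℂ)} (f : AinfSpace n Ω) (ℓ : Fin n → ℕ) :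
    Set.EqOn (AinfExt f ℓ) (Dml ℓ f.1) Ω :=
  (Classical.choose_spec (f.2.2 ℓ)).2

/-- Topology on `A^∞(Ω)`: uniform convergence of every partial derivative on every compact
subset of the closure of `Ω`. -/
instance (n : ℕ) (Ω : Set (Fin n → ℂ)) : TopologicalSpace (AinfSpace n Ω) :=
  TopologicalSpace.induced
    (fun f : AinfSpace n Ω => fun ℓ : Fin n → ℕ =>
      (⟨(closure Ω).restrict (AinfExt f ℓ),
        continuousOn_iff_continuous_restrict.mp (AinfExt_continuousOn f ℓ)⟩ :
          C(closure Ω, ℂ)))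
    inferInstance

/-- A smooth compact curve in `ℂⁿ`: the image of an injective `C^∞` map with
nowhere-vanishing derivative, defined on a compact interval (an arc) or on the
circle (a closed curve, modelled by a 1-periodic map). -/
def IsSmoothCompactCurve {n : ℕ} (K : Set (Fin n → ℂ)) : Prop :=
  ∃ γ : ℝ → (Fin n → ℂ), ContDiff ℝ (⊤ : ℕ∞) γ ∧ (∀ t, deriv γ t ≠ 0) ∧ K = γ '' Set.Icc 0 1 ∧
    (Set.InjOn γ (Set.Icc 0 1) ∨ (Function.Periodic γ 1 ∧ Set.InjOn γ (Set.Ico 0 1)))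

/-- A disjoint union of finitely many smooth compact curves. -/
def IsFiniteUnionOfSmoothCurves {n : ℕ} (K : Set (Fin n → ℂ)) : Prop :=
  ∃ (m : ℕ) (C : Fin m → Set (Fin n → ℂ)),
    (∀ i, IsSmoothCompactCurve (C i)) ∧ Pairwise (Function.onFun Disjoint C) ∧ K = ⋃ i, C i



/-- `f` is a uniform limit on `F` of polynomials. -/
def PA (F : Set ℂ) (f : ℂ → ℂ) : Prop :=
  ∀ ε > 0, ∃ q : Polynomial ℂ, ∀ z ∈ F, ‖f z - q.eval z‖ ≤ ε

lemma poly_bdd {F : Set ℂ} (hF : IsCompact F) (q : Polynomial ℂ) :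
    ∃ C, 0 ≤ C ∧ ∀ z ∈ F, ‖q.eval z‖ ≤ C := by
  obtain ⟨C, hC⟩ := hF.exists_bound_of_continuousOn (f := fun z => q.eval z) (by fun_prop)
  exact ⟨max C 0, le_max_right _ _, fun z hz => (hC z hz).trans (le_max_left _ _)⟩

lemma PA.poly {F : Set ℂ} (q : Polynomial ℂ) : PA F (fun z => q.eval z) := by
  intro ε hε
  exact ⟨q, fun z _ => by simpa using hε.le⟩

lemma PA.congr {F : Set ℂ} {f g : ℂ → ℂ} (hf : PA F f) (h : ∀ z ∈ F, g z = f z) : PA F g := by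
  intro ε hε
  obtain ⟨q, hq⟩ := hf ε hε
  exact ⟨q, fun z hz => by rw [h z hz]; exact hq z hz⟩

lemma PA.bdd {F : Set ℂ} (hF : IsCompact F) {f : ℂ → ℂ} (hf : PA F f) :
    ∃ C, 0 ≤ C ∧ ∀ z ∈ F, ‖f z‖ ≤ C := by
  obtain ⟨q, hq⟩ := hf 1 one_pos
  obtain ⟨C, h0, hC⟩ := poly_bdd hF q
  refine ⟨C + 1, by linarith, fun z hz => ?_⟩
  calc ‖f z‖ = ‖q.eval z + (f z - q.eval z)‖ := by congr 1; ring
    _ ≤ _ := (norm_add_le _ _).trans (add_le_add (hC z hz) (hq z hz))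

lemma PA.of_approx {F : Set ℂ} {f : ℂ → ℂ}
    (h : ∀ ε > 0, ∃ g, PA F g ∧ ∀ z ∈ F, ‖f z - g z‖ ≤ ε) : PA F f := by
  intro ε hε
  obtain ⟨g, hg, hfg⟩ := h (ε / 2) (by positivity)
  obtain ⟨q, hq⟩ := hg (ε / 2) (by positivity)
  refine ⟨q, fun z hz => ?_⟩
  calc ‖f z - q.eval z‖ = ‖(f z - g z) + (g z - q.eval z)‖ := by congr 1; ring
    _ ≤ _ := norm_add_le _ _
    _ ≤ ε := by linarith [hfg z hz, hq z hz]

lemma PA.add {F : Set ℂ} {f g : ℂ → ℂ} (hf : PA F f) (hg : PA F g) :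
    PA F (fun z => f z + g z) := by
  intro ε hε
  obtain ⟨q, hq⟩ := hf (ε / 2) (by positivity)
  obtain ⟨r, hr⟩ := hg (ε / 2) (by positivity)
  refine ⟨q + r, fun z hz => ?_⟩
  calc ‖f z + g z - (q + r).eval z‖ = ‖(f z - q.eval z) + (g z - r.eval z)‖ := by
        rw [Polynomial.eval_add]; congr 1; ring
    _ ≤ _ := norm_add_le _ _
    _ ≤ ε := by linarith [hq z hz, hr z hz]

lemma PA.mul {F : Set ℂ} (hF : IsCompact F) {f g : ℂ → ℂ} (hf : PA F f) (hg : PA F g) :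
    PA F (fun z => f z * g z) := by
  intro ε hε
  obtain ⟨C, hC0, hC⟩ := hf.bdd hF
  obtain ⟨r, hr⟩ := hg (ε / 2 / (C + 1)) (by positivity)
  obtain ⟨D, hD0, hD⟩ := poly_bdd hF r
  obtain ⟨q, hq⟩ := hf (ε / 2 / (D + 1)) (by positivity)
  refine ⟨q * r, fun z hz => ?_⟩
  have h1 : ‖f z‖ * ‖g z - r.eval z‖ ≤ (C + 1) * (ε / 2 / (C + 1)) := by
    gcongr
    · linarith [hC z hz]
    · exact hr z hz
  have h2 : ‖f z - q.eval z‖ * ‖r.eval z‖ ≤ (ε / 2 / (D + 1)) * (D + 1) := by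
    gcongr
    · exact hq z hz
    · linarith [hD z hz]
  have e1 : (C + 1) * (ε / 2 / (C + 1)) = ε / 2 := by field_simp
  have e2 : (ε / 2 / (D + 1)) * (D + 1) = ε / 2 := by field_simp
  calc ‖f z * g z - (q * r).eval z‖
      = ‖f z * (g z - r.eval z) + (f z - q.eval z) * r.eval z‖ := by
        rw [Polynomial.eval_mul]; congr 1; ring
    _ ≤ _ := norm_add_le _ _
    _ ≤ ε := by rw [norm_mul, norm_mul]; linarith

lemma PA.const {F : Set ℂ} (c : ℂ) : PA F (fun _ => c) :=
  (PA.poly (F := F) (Polynomial.C c)).congr (by simp)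

lemma PA.id {F : Set ℂ} : PA F (fun z => z) :=
  (PA.poly (F := F) Polynomial.X).congr (by simp)

lemma PA.pow {F : Set ℂ} (hF : IsCompact F) {f : ℂ → ℂ} (hf : PA F f) (k : ℕ) :
    PA F (fun z => f z ^ k) := by
  induction k with
  | zero => simpa using PA.const (F := F) 1
  | succ k ih => simpa [pow_succ] using ih.mul hF hf

lemma PA.sum {F : Set ℂ} {f : ℕ → ℂ → ℂ} (hf : ∀ i, PA F (f i)) (N : ℕ) :
    PA F (fun z => ∑ i ∈ Finset.range N, f i z) := by
  induction N with
  | zero => simpa using PA.const (F := F) 0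
  | succ k ih => simpa [Finset.sum_range_succ] using ih.add (hf k)

lemma PA.comp {F : Set ℂ} (hF : IsCompact F) {u : ℂ → ℂ} (hu : PA F u) {s : ℝ} (hs : s < 1)
    (hus : ∀ z ∈ F, ‖u z‖ ≤ s) {φ : ℂ → ℂ} (hφ : DifferentiableOn ℂ φ (Metric.ball 0 1)) :
    PA F (fun z => φ (u z)) := by
  rcases F.eq_empty_or_nonempty with rfl | ⟨z₀, hz₀⟩
  · intro ε _; exact ⟨0, by simp⟩
  have hs0 : 0 ≤ s := (norm_nonneg _).trans (hus z₀ hz₀)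
  obtain ⟨t, hst, ht1⟩ := exists_between hs
  obtain ⟨t', htt, ht1'⟩ := exists_between ht1
  have ht0 : 0 ≤ t := hs0.trans hst.le
  have ht0' : 0 < t' := lt_of_le_of_lt ht0 htt
  lift t to NNReal using ht0
  lift t' to NNReal using ht0'.le
  have hd : DifferentiableOn ℂ φ (Metric.closedBall 0 t') :=
    hφ.mono (Metric.closedBall_subset_ball ht1')
  have hp := hd.hasFPowerSeriesOnBall (by exact_mod_cast ht0')
  have hU := hp.tendstoUniformlyOn (r' := t) (by exact_mod_cast htt)
  apply PA.of_approx
  intro ε hε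
  rw [Metric.tendstoUniformlyOn_iff] at hU
  obtain ⟨N, hN⟩ := (hU ε hε).exists
  refine ⟨fun z => ∑ i ∈ Finset.range N, u z ^ i * (cauchyPowerSeries φ 0 t' i fun _ => 1), ?_, ?_⟩
  · exact PA.sum (fun i => (hu.pow hF i).mul hF (PA.const _)) N
  · intro z hz
    have := hN (u z) (by simpa using lt_of_le_of_lt (hus z hz) hst)
    rw [zero_add, dist_eq_norm] at this
    have e : (cauchyPowerSeries φ 0 (t' : ℝ)).partialSum N (u z) =
        ∑ i ∈ Finset.range N, u z ^ i * (cauchyPowerSeries φ 0 t' i fun _ => 1) := by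
      simp only [FormalMultilinearSeries.partialSum]
      refine Finset.sum_congr rfl fun i _ => ?_
      rw [FormalMultilinearSeries.apply_eq_pow_smul_coeff, smul_eq_mul]
      rfl
    rw [e] at this
    exact this.le

lemma exists_gap {F : Set ℂ} {z : ℂ} (hz : z ∉ polyHull1 F) (hF : IsCompact F) :
    ∃ q : Polynomial ℂ, ∃ s, 0 ≤ s ∧ s < ‖q.eval z‖ ∧ ∀ w ∈ F, ‖q.eval w‖ ≤ s := by
  simp only [polyHull1, mem_ofPred_eq, not_forall, not_le] at hz
  obtain ⟨q, hq⟩ := hz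
  refine ⟨q, _, Real.sSup_nonneg ?_, hq, fun w hw => ?_⟩
  · rintro _ ⟨w, _, rfl⟩; exact norm_nonneg _
  · exact le_csSup (hF.image (by fun_prop)).bddAbove ⟨w, hw, rfl⟩

lemma hull_bound {F : Set ℂ} (hF : F.Nonempty) {z : ℂ} (hz : z ∈ polyHull1 F) (q : Polynomial ℂ)
    {s : ℝ} (h : ∀ w ∈ F, ‖q.eval w‖ ≤ s) : ‖q.eval z‖ ≤ s := by
  refine (hz q).trans (csSup_le (hF.image _) ?_)
  rintro _ ⟨w, hw, rfl⟩; exact h w hw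

/-- Runge-type statement. -/
lemma PA.inv {F : Set ℂ} (hF : IsCompact F) {z : ℂ} (hz : z ∉ polyHull1 F) (hzF : z ∉ F) :
    PA F (fun ζ => (ζ - z)⁻¹) := by
  obtain ⟨q, s, hs0, hs, hq⟩ := exists_gap hz hF
  have hqz : 0 < ‖q.eval z‖ := hs0.trans_lt hs
  have hqz' : q.eval z ≠ 0 := norm_pos_iff.1 hqz
  obtain ⟨r, hr⟩ : (Polynomial.X - Polynomial.C z) ∣ q - Polynomial.C (q.eval z) :=
    Polynomial.dvd_iff_isRoot.2 (by simp)
  have h1 : PA F (fun ζ => q.eval ζ * (q.eval z)⁻¹) := (PA.poly q).mul hF (PA.const _)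
  have h2 := h1.comp hF (s := s / ‖q.eval z‖) (by rw [div_lt_one hqz]; exact hs)
    (fun w hw => by
      rw [norm_mul, norm_inv, ← div_eq_mul_inv]
      exact div_le_div_of_nonneg_right (hq w hw) hqz.le) (φ := fun u => (1 - u)⁻¹) (by
      intro u hu
      refine (DifferentiableAt.inv (by fun_prop) ?_).differentiableWithinAt
      intro h
      have : u = 1 := by linear_combination -h
      simp [this] at hu)
  have h3 := (h2.mul hF (PA.poly r)).mul hF (PA.const (-(q.eval z)⁻¹))
  refine h3.congr fun w hw => ?_
  have e := congrArg (Polynomial.eval w) hr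
  simp only [Polynomial.eval_sub, Polynomial.eval_C, Polynomial.eval_mul, Polynomial.eval_X] at e
  have hwz : w - z ≠ 0 := sub_ne_zero.2 (fun h => hzF (h ▸ hw))
  have hne : q.eval z - q.eval w ≠ 0 := by
    intro h
    have : q.eval z = q.eval w := by linear_combination h
    have := hq w hw
    rw [← ‹q.eval z = q.eval w›] at this
    linarith
  have hr0 : r.eval w = (q.eval w - q.eval z) / (w - z) := by rw [e]; field_simp
  have h5 : (1 - q.eval w * (q.eval z)⁻¹) = (q.eval z - q.eval w) / q.eval z := by field_simp
  rw [hr0, h5]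
  field_simp
  ring

lemma not_mem_hull {F : Set ℂ} (hF : F.Nonempty) (hFc : IsCompact F) {z : ℂ} (hzF : z ∉ F)
    (h : PA F (fun ζ => (ζ - z)⁻¹)) : z ∉ polyHull1 F := by
  intro hz
  obtain ⟨C, hC0, hC⟩ := poly_bdd hFc (Polynomial.X - Polynomial.C z)
  obtain ⟨q, hq⟩ := h (1 / 2 / (C + 1)) (by positivity)
  have := hull_bound hF hz (1 - q * (Polynomial.X - Polynomial.C z)) (s := 1 / 2) (by
    intro w hw
    have hwz : w - z ≠ 0 := sub_ne_zero.2 (fun h => hzF (h ▸ hw))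
    have e : Polynomial.eval w (1 - q * (Polynomial.X - Polynomial.C z))
      = ((w - z)⁻¹ - q.eval w) * (w - z) := by
      simp only [Polynomial.eval_sub, Polynomial.eval_one, Polynomial.eval_mul, Polynomial.eval_X,
        Polynomial.eval_C]
      field_simp
    rw [e, norm_mul]
    have h1 := hC w hw
    simp only [Polynomial.eval_sub, Polynomial.eval_X, Polynomial.eval_C] at h1
    calc _ ≤ (1 / 2 / (C + 1)) * (C + 1) := by
          gcongr
          · exact hq w hw
          · linarith
      _ = 1 / 2 := by field_simp)
  simp at this
  norm_num at this

lemma hull_diff_isOpen {F : Set ℂ} (hF : F.Nonempty) (hFc : IsCompact F) :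
    IsOpen (polyHull1 F \ F) := by
  rw [Metric.isOpen_iff]
  rintro z ⟨hz, hzF⟩
  have hd : 0 < Metric.infDist z F :=
    (hFc.isClosed.notMem_iff_infDist_pos hF).1 hzF
  set d := Metric.infDist z F with hdd
  refine ⟨d / 4, by positivity, fun z' hz' => ?_⟩
  rw [Metric.mem_ball, dist_eq_norm] at hz'
  have hdist : ∀ w ∈ F, 3 * d / 4 ≤ ‖w - z'‖ := by
    intro w hw
    have h1 : d ≤ dist z w := Metric.infDist_le_dist_of_mem hw
    rw [dist_eq_norm] at h1
    have h2 : ‖z - w‖ ≤ ‖z' - z‖ + ‖w - z'‖ := by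
      rw [norm_sub_rev z' z, norm_sub_rev w z']
      simpa using norm_add_le (z - z') (z' - w)
    linarith
  have hz'F : z' ∉ F := fun h => by
    have := hdist z' h
    simp at this
    linarith
  refine ⟨?_, hz'F⟩
  by_contra hcon
  refine not_mem_hull hF hFc hzF ?_ hz
  have hv := PA.inv hFc hcon hz'F
  have hu := hv.mul hFc (PA.const (z - z'))
  have h2 := hu.comp hFc (s := 1 / 2) (by norm_num)
    (fun w hw => by
      have h3 := hdist w hw
      rw [norm_mul, norm_inv, inv_mul_le_iff₀ (by linarith), norm_sub_rev]
      linarith) (φ := fun u => (1 - u)⁻¹) (by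
      intro u hu
      refine (DifferentiableAt.inv (by fun_prop) ?_).differentiableWithinAt
      intro h
      have : u = 1 := by linear_combination -h
      simp [this] at hu)
  refine (hv.mul hFc h2).congr fun w hw => ?_
  have h1 : w - z' ≠ 0 := sub_ne_zero.2 (fun h => hz'F (h ▸ hw))
  rw [← mul_inv]
  congr 1
  field_simp
  ring

lemma hull_isClosed (F : Set ℂ) : IsClosed (polyHull1 F) := by
  have : polyHull1 F = ⋂ p : Polynomial ℂ,
      {z | ‖p.eval z‖ ≤ sSup ((fun w => ‖p.eval w‖) '' F)} := by
    ext; simp [polyHull1]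
  rw [this]
  exact isClosed_iInter fun p => isClosed_le (by fun_prop) continuous_const

lemma hull_isBounded {F : Set ℂ} (hF : F.Nonempty) (hFc : IsCompact F) :
    Bornology.IsBounded (polyHull1 F) := by
  obtain ⟨C, _, hC⟩ := poly_bdd hFc Polynomial.X
  refine (Metric.isBounded_closedBall (x := (0 : ℂ)) (r := C)).subset fun z hz => ?_
  simpa using hull_bound hF hz Polynomial.X hC

lemma subset_hull {F : Set ℂ} (hFc : IsCompact F) : F ⊆ polyHull1 F := fun z hz q =>
  le_csSup (hFc.image (f := fun w => ‖q.eval w‖) (by fun_prop)).bddAbove ⟨z, hz, rfl⟩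

/-- A bounded set, relatively clopen in the complement of a polynomially convex set, is empty. -/
lemma clopen_empty {F : Set ℂ} (hFc : IsCompact F) (hF : IsPolyConvex1 F) {B : Set ℂ}
    (hB : B ⊆ Fᶜ) (hbd : Bornology.IsBounded B)
    (h : ∀ b ∈ Fᶜ, ∃ r > 0, ∀ b' ∈ Fᶜ, dist b' b < r → (b' ∈ B ↔ b ∈ B)) : B = ∅ := by
  have hopen : IsOpen B := by
    rw [Metric.isOpen_iff]
    intro b hb
    obtain ⟨r, hr, h1⟩ := h b (hB hb)
    obtain ⟨r', hr', h2⟩ := Metric.isOpen_iff.1 hFc.isClosed.isOpen_compl b (hB hb)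
    refine ⟨min r r', lt_min hr hr', fun b' hb' => ?_⟩
    rw [Metric.mem_ball, lt_min_iff] at hb'
    exact (h1 b' (h2 hb'.2) hb'.1).2 hb
  have hfr : frontier B ⊆ F := by
    intro z hz
    by_contra hzF
    obtain ⟨r, hr, h1⟩ := h z hzF
    obtain ⟨b, hb, hbz⟩ := Metric.mem_closure_iff.1 (frontier_subset_closure hz) r hr
    have := (h1 b (hB hb) (by rwa [dist_comm])).1 hb
    rw [hopen.frontier_eq] at hz
    exact hz.2 this
  rw [eq_empty_iff_forall_notMem]
  intro z hz
  apply hB hz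
  rw [← hF]
  intro q
  refine Complex.norm_le_of_forall_mem_frontier_norm_le hbd (f := fun z => q.eval z)
    (Differentiable.diffContOnCl (by fun_prop)) ?_ (subset_closure hz)
  intro w hw
  exact subset_hull hFc (hfr hw) q

def SQ (F : Set ℂ) (a : ℂ) (δ : ℝ) (b : ℂ) : Prop :=
  ∃ s : ℂ → ℂ, PA F s ∧ (∀ ζ ∈ F, s ζ ^ 2 = (ζ - a) * (ζ - b)) ∧
    ∀ ζ ∈ F, 6 * δ ≤ ‖ζ‖ → 0 < (s ζ / ζ).re

lemma re_mul_pos_of_sq {x y : ℂ} (hx : 0 < x.re) (hy : 0 < y.re) (hx2 : 0 < (x ^ 2).re)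
    (hy2 : 0 < (y ^ 2).re) : 0 < (x * y).re := by
  rw [pow_two, Complex.mul_re] at hx2 hy2
  rw [Complex.mul_re]
  have h1 : |x.im| < x.re := abs_lt_of_sq_lt_sq (by nlinarith) hx.le
  have h2 : |y.im| < y.re := abs_lt_of_sq_lt_sq (by nlinarith) hy.le
  have h3 : |x.im| * |y.im| < x.re * y.re := by
    apply mul_lt_mul'' h1 h2 <;> positivity
  have := le_abs_self (x.im * y.im)
  rw [abs_mul] at this
  linarith

lemma sqrt_props {u : ℂ} (hu : ‖u‖ ≤ 1 / 2) :
    Complex.exp (Complex.log (1 + u) / 2) ^ 2 = 1 + u ∧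
    0 < (Complex.exp (Complex.log (1 + u) / 2)).re ∧
    0 < (Complex.exp (Complex.log (1 + u) / 2) ^ 2).re := by
  have hre : 0 < (1 + u).re := by
    have := (abs_le.1 ((Complex.abs_re_le_norm u).trans hu)).1
    simp; linarith
  have hne : 1 + u ≠ 0 := fun h => by simp [h] at hre
  have h1 : Complex.exp (Complex.log (1 + u) / 2) ^ 2 = 1 + u := by
    rw [← Complex.exp_nat_mul]
    push_cast
    rw [mul_div_cancel₀ _ (two_ne_zero), Complex.exp_log hne]
  refine ⟨h1, ?_, by rw [h1]; exact hre⟩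
  rw [Complex.exp_re]
  have ha := Complex.abs_arg_lt_pi_div_two_iff.2 (Or.inl hre)
  have hi : (Complex.log (1 + u) / 2).im = (1 + u).arg / 2 := by
    rw [show (Complex.log (1 + u) / 2) = Complex.log (1 + u) / ((2 : ℝ) : ℂ) by norm_num,
      Complex.div_ofReal_im, Complex.log_im]
  rw [hi]
  have := abs_lt.1 ha
  have : 0 < Real.cos ((1 + u).arg / 2) :=
    Real.cos_pos_of_mem_Ioo ⟨by linarith [Real.pi_pos], by linarith [Real.pi_pos]⟩
  positivity

lemma sq_re_pos {a b ζ s : ℂ} {δ : ℝ} (hδ : 0 < δ) (ha : ‖a‖ < δ) (hb : ‖b‖ < 3 * δ)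
    (hζ : 6 * δ ≤ ‖ζ‖) (hs : s ^ 2 = (ζ - a) * (ζ - b)) : 0 < ((s / ζ) ^ 2).re := by
  have hζ0 : 0 < ‖ζ‖ := by linarith
  have hζ' : ζ ≠ 0 := norm_pos_iff.1 hζ0
  have h1 : ‖a / ζ‖ ≤ 1 / 6 := by rw [norm_div, div_le_iff₀ hζ0]; linarith
  have h2 : ‖b / ζ‖ ≤ 1 / 2 := by rw [norm_div, div_le_iff₀ hζ0]; linarith
  have e : (s / ζ) ^ 2 = 1 - (a / ζ + b / ζ - a / ζ * (b / ζ)) := by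
    rw [div_pow, hs]; field_simp; ring
  have h3 : ‖a / ζ + b / ζ - a / ζ * (b / ζ)‖ ≤ 3 / 4 := by
    calc _ ≤ ‖a / ζ + b / ζ‖ + ‖a / ζ * (b / ζ)‖ := norm_sub_le _ _
      _ ≤ ‖a / ζ‖ + ‖b / ζ‖ + ‖a / ζ‖ * ‖b / ζ‖ := by
        rw [norm_mul]; gcongr; exact norm_add_le _ _
      _ ≤ 1 / 6 + 1 / 2 + 1 / 6 * (1 / 2) := by gcongr
      _ = 3 / 4 := by norm_num
  rw [e, Complex.sub_re, Complex.one_re]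
  have := (Complex.re_le_norm _).trans h3
  linarith

lemma SQ.step {F : Set ℂ} (hFc : IsCompact F) (hF : IsPolyConvex1 F) {a b b' : ℂ} {δ : ℝ}
    (hδ : 0 < δ) (ha : ‖a‖ < δ) (hb : ‖b‖ < 3 * δ) (hbF : b ∉ F)
    (hbb : ∀ ζ ∈ F, 2 * ‖b - b'‖ ≤ ‖ζ - b‖) (h : SQ F a δ b) : SQ F a δ b' := by
  obtain ⟨s, hs, hs2, hs3⟩ := h
  have hv : PA F (fun ζ => (ζ - b)⁻¹) := PA.inv hFc (by rw [hF]; exact hbF) hbF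
  have hne : ∀ ζ ∈ F, ζ - b ≠ 0 := fun ζ hζ => sub_ne_zero.2 (fun h => hbF (h ▸ hζ))
  have hus : ∀ ζ ∈ F, ‖(ζ - b)⁻¹ * (b - b')‖ ≤ 1 / 2 := by
    intro ζ hζ
    rw [norm_mul, norm_inv, inv_mul_le_iff₀ (norm_pos_iff.2 (hne ζ hζ))]
    linarith [hbb ζ hζ]
  have hφ := (hv.mul hFc (PA.const (b - b'))).comp hFc (s := 1 / 2) (by norm_num) hus
    (φ := fun u => Complex.exp (Complex.log (1 + u) / 2)) (by
      intro u hu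
      have : (1 + u) ∈ Complex.slitPlane := by
        left
        have := (abs_lt.1 ((Complex.abs_re_le_norm u).trans_lt (by simpa using hu))).1
        simp; linarith
      refine DifferentiableAt.differentiableWithinAt ?_
      fun_prop (disch := assumption))
  refine ⟨_, hs.mul hFc hφ, fun ζ hζ => ?_, fun ζ hζ hζ6 => ?_⟩
  · have := hne ζ hζ
    rw [mul_pow, hs2 ζ hζ, (sqrt_props (hus ζ hζ)).1]
    field_simp
    ring
  · rw [mul_div_right_comm]
    obtain ⟨-, h1, h2⟩ := sqrt_props (hus ζ hζ)
    exact re_mul_pos_of_sq (hs3 ζ hζ hζ6) h1 (sq_re_pos hδ ha hb hζ6 (hs2 ζ hζ)) h2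

lemma exists_SQ {F : Set ℂ} (hFc : IsCompact F) (hne : F.Nonempty) (hF : IsPolyConvex1 F)
    {a : ℂ} {δ : ℝ} (hδ : 0 < δ) (ha : ‖a‖ < δ) (haF : a ∉ F) :
    ∃ b, ‖b‖ = 2 * δ ∧ SQ F a δ b := by
  by_contra hcon
  push Not at hcon
  have hB := clopen_empty hFc hF (B := {b | b ∉ F ∧ ‖b‖ < 2 * δ ∧ SQ F a δ b})
    (fun b hb => hb.1) ((Metric.isBounded_ball (x := (0 : ℂ)) (r := 2 * δ)).subset
      (fun b hb => by simpa using hb.2.1)) (by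
      intro b hb
      have hd : 0 < Metric.infDist b F := (hFc.isClosed.notMem_iff_infDist_pos hne).1 hb
      by_cases hb2 : ‖b‖ ≤ 2 * δ
      ·
        refine ⟨min (min (Metric.infDist b F / 3) (δ / 2))
          (if ‖b‖ = 2 * δ then δ else 2 * δ - ‖b‖), ?_, ?_⟩
        · refine lt_min (lt_min (by positivity) (by positivity)) ?_
          split_ifs with h
          · exact hδ
          · have := lt_of_le_of_ne hb2 h
            linarith
        · intro b' hb' hbb
          rw [lt_min_iff, lt_min_iff, dist_eq_norm] at hbb
          obtain ⟨⟨h1, h2⟩, h3⟩ := hbb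
          have hdist : ∀ ζ ∈ F, 3 * ‖b - b'‖ ≤ ‖ζ - b‖ := fun ζ hζ => by
            have : Metric.infDist b F ≤ dist b ζ := Metric.infDist_le_dist_of_mem hζ
            rw [dist_eq_norm, norm_sub_rev] at this
            rw [norm_sub_rev b b']
            linarith
          have hdist' : ∀ ζ ∈ F, 2 * ‖b' - b‖ ≤ ‖ζ - b'‖ := fun ζ hζ => by
            have := hdist ζ hζ
            have h4 : ‖ζ - b‖ ≤ ‖ζ - b'‖ + ‖b' - b‖ := by
              simpa using norm_add_le (ζ - b') (b' - b)
            rw [norm_sub_rev] at this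
            linarith
          have hn : ‖b'‖ ≤ ‖b‖ + ‖b' - b‖ := by simpa using norm_add_le b (b' - b)
          have hiff : SQ F a δ b' ↔ SQ F a δ b :=
            ⟨SQ.step hFc hF hδ ha (by linarith) hb' hdist',
             SQ.step hFc hF hδ ha (by linarith) hb
              (fun ζ hζ => by linarith [hdist ζ hζ, norm_nonneg (b - b')])⟩
          by_cases hS : SQ F a δ b
          · have h5 : ‖b‖ ≠ 2 * δ := fun h => hcon b h hS
            rw [if_neg h5] at h3
            exact ⟨fun _ => ⟨hb, lt_of_le_of_ne hb2 h5, hS⟩,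
              fun _ => ⟨hb', by linarith, hiff.2 hS⟩⟩
          · exact ⟨fun h => absurd (hiff.1 h.2.2) hS, fun h => absurd h.2.2 hS⟩
      · push Not at hb2
        refine ⟨‖b‖ - 2 * δ, by linarith, fun b' hb' hbb => ?_⟩
        rw [dist_eq_norm] at hbb
        have hn : ‖b‖ ≤ ‖b'‖ + ‖b' - b‖ := by
          rw [norm_sub_rev]; simpa using norm_add_le b' (b - b')
        exact ⟨fun h => absurd h.2.1 (by linarith), fun h => absurd h.2.1 (by linarith)⟩)
  have : a ∈ {b | b ∉ F ∧ ‖b‖ < 2 * δ ∧ SQ F a δ b} := by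
    refine ⟨haF, by linarith, fun ζ => ζ - a,
      (PA.poly (Polynomial.X - Polynomial.C a)).congr (by simp), fun ζ _ => by ring, ?_⟩
    intro ζ _ hζ
    have hζ0 : 0 < ‖ζ‖ := by linarith
    have hζ' : ζ ≠ 0 := norm_pos_iff.1 hζ0
    have h1 : ‖a / ζ‖ ≤ 1 / 6 := by rw [norm_div, div_le_iff₀ hζ0]; linarith
    rw [sub_div, div_self hζ', Complex.sub_re, Complex.one_re]
    have := (Complex.re_le_norm _).trans h1
    linarith
  rw [hB] at this
  exact this

lemma peak {F : Set ℂ} (hFc : IsCompact F) (hF : IsPolyConvex1 F) (h0 : (0 : ℂ) ∈ frontier F)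
    {ρ ε : ℝ} (hρ : 0 < ρ) (hε : 0 < ε) :
    ∃ q : Polynomial ℂ, 1 / 2 ≤ ‖q.eval 0‖ ∧ (∀ z ∈ F, ‖q.eval z‖ ≤ 770) ∧
      ∀ z ∈ F, ρ ≤ ‖z‖ → ‖q.eval z‖ ≤ ε := by
  have h0F : (0 : ℂ) ∈ F := hFc.isClosed.frontier_subset h0
  obtain ⟨δ, hδ, hδρ, hδε⟩ : ∃ δ > 0, 6 * δ ≤ ρ ∧ 8 * δ / ρ ≤ ε / 2 := by
    refine ⟨min (ρ / 6) (ε * ρ / 16), by positivity, ?_, ?_⟩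
    · linarith [min_le_left (ρ / 6) (ε * ρ / 16)]
    · rw [div_le_iff₀ hρ]
      linarith [min_le_right (ρ / 6) (ε * ρ / 16)]
  obtain ⟨a, haF, ha⟩ : ∃ a, a ∉ F ∧ ‖a‖ < δ := by
    rw [frontier_eq_closure_inter_closure] at h0
    obtain ⟨a, ha, hd⟩ := Metric.mem_closure_iff.1 h0.2 δ hδ
    exact ⟨a, ha, by simpa using hd⟩
  obtain ⟨b, hb, s, hs, hs2, hs3⟩ := exists_SQ hFc ⟨0, h0F⟩ hF hδ ha haF
  set m := (a + b) / 2 with hm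
  set κ := (a - b) ^ 2 / 8 with hκ
  have hm' : ‖m‖ ≤ 3 / 2 * δ := by
    rw [hm, norm_div]
    have := norm_add_le a b
    simp only [Complex.norm_ofNat]
    linarith
  have hab : δ ≤ ‖a - b‖ := by
    have : ‖b‖ ≤ ‖a‖ + ‖a - b‖ := by
      rw [norm_sub_rev]; simpa using norm_add_le a (b - a)
    linarith
  have hab' : ‖a - b‖ ≤ 3 * δ := by linarith [norm_sub_le a b]
  have hκn : ‖κ‖ = ‖a - b‖ ^ 2 / 8 := by rw [hκ, norm_div, norm_pow]; simp
  have hκ1 : δ ^ 2 / 8 ≤ ‖κ‖ := by rw [hκn]; gcongr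
  have hκ2 : ‖κ‖ ≤ 9 * δ ^ 2 / 8 := by rw [hκn]; nlinarith [norm_nonneg (a - b)]
  have hκpos : 0 < ‖κ‖ := lt_of_lt_of_le (by positivity) hκ1
  have hκ0 : κ ≠ 0 := norm_pos_iff.1 hκpos
  let H : ℂ → ℂ := fun ζ => ζ - m - s ζ
  let k : ℂ → ℂ := fun ζ => 1 - ζ * H ζ / κ
  have hH : ∀ ζ ∈ F, H ζ * (ζ - m + s ζ) = 2 * κ := by
    intro ζ hζ
    have : H ζ * (ζ - m + s ζ) = (ζ - m) ^ 2 - s ζ ^ 2 := by simp only [H]; ring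
    rw [this, hs2 ζ hζ, hm, hκ]; ring
  have hk2 : ∀ ζ ∈ F, k ζ = -(H ζ * (m + H ζ / 2)) / κ := by
    intro ζ hζ
    have h1 := hH ζ hζ
    have h2 : s ζ = ζ - m - H ζ := by simp only [H]; ring
    rw [h2] at h1
    simp only [k]
    rw [eq_div_iff hκ0, sub_mul, div_mul_cancel₀ _ hκ0]
    linear_combination (-1 / 2 : ℂ) * h1
  have hPH : PA F H := by
    have h1 : PA F (fun ζ => ζ + -m) := PA.id.add (PA.const (-m))
    have h2 := h1.add (hs.mul hFc (PA.const (-1)))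
    exact h2.congr fun z _ => by simp only [H]; ring
  have hPk : PA F k := by
    have h1 := (PA.const 1).add ((PA.id.mul hFc hPH).mul hFc (PA.const (-κ⁻¹)))
    exact h1.congr fun z _ => by simp only [k]; field_simp; ring
  have hfar : ∀ ζ ∈ F, 6 * δ ≤ ‖ζ‖ → ‖k ζ‖ ≤ 8 * δ / ‖ζ‖ := by
    intro ζ hζ h6
    have hζ0 : 0 < ‖ζ‖ := by linarith
    have hζ' : ζ ≠ 0 := norm_pos_iff.1 hζ0
    have h1 : 1 / 2 ≤ ‖(ζ - m + s ζ) / ζ‖ := by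
      refine le_trans ?_ (Complex.re_le_norm _)
      have h2 : ‖m / ζ‖ ≤ 1 / 4 := by rw [norm_div, div_le_iff₀ hζ0]; linarith
      have h3 := (Complex.re_le_norm _).trans h2
      have h4 := hs3 ζ hζ h6
      rw [add_div, sub_div, div_self hζ', Complex.add_re, Complex.sub_re, Complex.one_re]
      linarith
    rw [norm_div, le_div_iff₀ hζ0] at h1
    have h2 : ‖H ζ‖ * ‖ζ‖ ≤ 4 * ‖κ‖ := by
      have := congrArg norm (hH ζ hζ)
      rw [norm_mul, norm_mul, Complex.norm_ofNat] at this
      nlinarith [norm_nonneg (H ζ)]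
    have h3 : ‖H ζ‖ ≤ δ := by
      have : ‖H ζ‖ * (6 * δ) ≤ 4 * (9 * δ ^ 2 / 8) := by
        refine le_trans ?_ (h2.trans (by linarith))
        gcongr
      by_contra hc
      push Not at hc
      nlinarith
    rw [hk2 ζ hζ, norm_div, norm_neg, norm_mul, div_le_div_iff₀ hκpos hζ0]
    have h4 : ‖m + H ζ / 2‖ ≤ 2 * δ := by
      refine (norm_add_le _ _).trans ?_
      have h5 : ‖H ζ / 2‖ = ‖H ζ‖ / 2 := by rw [norm_div, Complex.norm_ofNat]
      linarith
    calc ‖H ζ‖ * ‖m + H ζ / 2‖ * ‖ζ‖ = (‖H ζ‖ * ‖ζ‖) * ‖m + H ζ / 2‖ := by ring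
      _ ≤ (4 * ‖κ‖) * (2 * δ) := by gcongr
      _ = 8 * δ * ‖κ‖ := by ring
  have hnear : ∀ ζ ∈ F, ‖ζ‖ ≤ 6 * δ → ‖k ζ‖ ≤ 769 := by
    intro ζ hζ h6
    have h1 : ‖s ζ‖ ≤ 8 * δ := by
      have := congrArg norm (hs2 ζ hζ)
      rw [norm_mul, norm_pow] at this
      have h2 : ‖ζ - a‖ ≤ 7 * δ := by linarith [norm_sub_le ζ a]
      have h3 : ‖ζ - b‖ ≤ 8 * δ := by linarith [norm_sub_le ζ b]
      have h4 : ‖ζ - a‖ * ‖ζ - b‖ ≤ 7 * δ * (8 * δ) := by gcongr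
      refine abs_le_of_sq_le_sq' ?_ (by positivity) |>.2
      nlinarith
    have h2 : ‖H ζ‖ ≤ 16 * δ := by
      have h3 := norm_sub_le (ζ - m) (s ζ)
      have h4 := norm_sub_le ζ m
      simp only [H]
      linarith
    calc ‖k ζ‖ ≤ ‖(1 : ℂ)‖ + ‖ζ * H ζ / κ‖ := norm_sub_le _ _
      _ ≤ 1 + 6 * δ * (16 * δ) / (δ ^ 2 / 8) := by
        rw [norm_div, norm_mul, norm_one]; gcongr
      _ = 769 := by field_simp; norm_num
  have hall : ∀ ζ ∈ F, ‖k ζ‖ ≤ 769 := by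
    intro ζ hζ
    rcases le_total ‖ζ‖ (6 * δ) with h | h
    · exact hnear ζ hζ h
    · refine (hfar ζ hζ h).trans ?_
      rw [div_le_iff₀ (by linarith)]
      linarith
  obtain ⟨q, hq⟩ := hPk (min (ε / 2) (1 / 2)) (by positivity)
  have hq1 : ∀ z ∈ F, ‖q.eval z‖ ≤ ‖k z‖ + min (ε / 2) (1 / 2) := by
    intro z hz
    have h1 := hq z hz
    have h2 : ‖q.eval z‖ ≤ ‖k z‖ + ‖k z - q.eval z‖ := by
      rw [norm_sub_rev (k z)]; simpa using norm_add_le (k z) (q.eval z - k z)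
    linarith
  have m1 := min_le_left (ε / 2) (1 / 2)
  have m2 := min_le_right (ε / 2) (1 / 2)
  refine ⟨q, ?_, fun z hz => ?_, fun z hz hρz => ?_⟩
  · have h1 := hq 0 h0F
    have h2 : k 0 = 1 := by simp [k]
    rw [h2] at h1
    have h3 : ‖(1 : ℂ)‖ ≤ ‖q.eval 0‖ + ‖1 - q.eval 0‖ := by
      simpa using norm_add_le (q.eval 0) (1 - q.eval 0)
    rw [norm_one] at h3
    linarith
  · linarith [hq1 z hz, hall z hz]
  · have h1 := hfar z hz (by linarith)
    have h2 : 8 * δ / ‖z‖ ≤ 8 * δ / ρ := by gcongr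
    linarith [hq1 z hz]

/-- `f` has a continuous logarithm on `s`. -/
def HL (s : Set ℂ) (f : ℂ → ℂ) : Prop :=
  ∃ g : ℂ → ℂ, ContinuousOn g s ∧ ∀ x ∈ s, Complex.exp (g x) = f x

lemma slit_of_near_one {x : ℂ} (h : ‖x - 1‖ ≤ 1 / 2) : x ∈ Complex.slitPlane := by
  left
  have := (abs_le.1 ((Complex.abs_re_le_norm (x - 1)).trans h)).1
  simp at this; linarith

lemma HL.step {s : Set ℂ} {f f' : ℂ → ℂ} (hf : ContinuousOn f s) (hf' : ContinuousOn f' s)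
    (h0 : ∀ x ∈ s, f x ≠ 0) (h : ∀ x ∈ s, 2 * ‖f' x - f x‖ ≤ ‖f x‖) (hl : HL s f) : HL s f' := by
  obtain ⟨g, hg, hgf⟩ := hl
  have hsl : ∀ x ∈ s, f' x / f x ∈ Complex.slitPlane := by
    intro x hx
    apply slit_of_near_one
    have e : f' x / f x - 1 = (f' x - f x) / f x := by have := h0 x hx; field_simp
    rw [e, norm_div, div_le_iff₀ (norm_pos_iff.2 (h0 x hx))]
    linarith [h x hx]
  refine ⟨fun x => g x + Complex.log (f' x / f x), ?_, ?_⟩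
  · exact hg.add ((hf'.div hf h0).clog hsl)
  · intro x hx
    rw [Complex.exp_add, hgf x hx, Complex.exp_log (Complex.slitPlane_ne_zero (hsl x hx))]
    have := h0 x hx
    field_simp

lemma log_exists {F : Set ℂ} (hFc : IsCompact F) (hne : F.Nonempty) (hF : IsPolyConvex1 F)
    {z : ℂ} (hz : z ∉ F) : HL F (fun ζ => ζ - z) := by
  by_contra hcon
  obtain ⟨C, hC0, hC⟩ := poly_bdd hFc Polynomial.X
  simp only [Polynomial.eval_X] at hC
  have hB := clopen_empty hFc hF (B := {b | b ∉ F ∧ ¬ HL F (fun ζ => ζ - b)})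
    (fun b hb => hb.1) ((Metric.isBounded_closedBall (x := (0 : ℂ)) (r := 2 * C)).subset
      (fun b hb => by
        by_contra hbC
        simp only [Metric.mem_closedBall, dist_zero_right, not_le] at hbC
        apply hb.2
        have hb0 : 0 < ‖b‖ := by linarith
        have hb0' : b ≠ 0 := norm_pos_iff.1 hb0
        refine HL.step (f := fun _ => -b) (by fun_prop) (by fun_prop) (fun _ _ => by simpa) ?_
          ⟨fun _ => Complex.log (-b), by fun_prop, fun _ _ => Complex.exp_log (by simpa)⟩
        intro x hx
        have := hC x hx
        simp
        linarith)) (by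
      intro b hb
      have hd : 0 < Metric.infDist b F := (hFc.isClosed.notMem_iff_infDist_pos hne).1 hb
      refine ⟨Metric.infDist b F / 3, by positivity, fun b' hb' hbb => ?_⟩
      rw [dist_eq_norm] at hbb
      have hdist : ∀ ζ ∈ F, 3 * ‖b - b'‖ ≤ ‖ζ - b‖ := fun ζ hζ => by
        have : Metric.infDist b F ≤ dist b ζ := Metric.infDist_le_dist_of_mem hζ
        rw [dist_eq_norm, norm_sub_rev] at this
        rw [norm_sub_rev b b']
        linarith
      have hdist' : ∀ ζ ∈ F, 2 * ‖b' - b‖ ≤ ‖ζ - b'‖ := fun ζ hζ => by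
        have := hdist ζ hζ
        have h4 : ‖ζ - b‖ ≤ ‖ζ - b'‖ + ‖b' - b‖ := by
          simpa using norm_add_le (ζ - b') (b' - b)
        rw [norm_sub_rev] at this
        linarith
      have hiff : HL F (fun ζ => ζ - b') ↔ HL F (fun ζ => ζ - b) := by
        constructor
        · refine HL.step (by fun_prop) (by fun_prop)
            (fun x hx => sub_ne_zero.2 (fun h => hb' (h ▸ hx))) (fun x hx => ?_)
          simpa using hdist' x hx
        · refine HL.step (by fun_prop) (by fun_prop)
            (fun x hx => sub_ne_zero.2 (fun h => hb (h ▸ hx))) (fun x hx => ?_)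
          have := hdist x hx
          simp only [sub_sub_sub_cancel_left]
          linarith [norm_nonneg (b - b')]
      exact ⟨fun h => ⟨hb, fun h' => h.2 (hiff.2 h')⟩, fun h => ⟨hb', fun h' => h.2 (hiff.1 h')⟩⟩)
  have : z ∈ {b | b ∉ F ∧ ¬ HL F (fun ζ => ζ - b)} := ⟨hz, hcon⟩
  rw [hB] at this
  exact this

lemma no_log_circle : ¬ HL (Metric.sphere 0 1) (fun w => w) := by
  rintro ⟨g, hg, hgw⟩
  have hmem : ∀ t : ℝ, Complex.exp (t * Complex.I) ∈ Metric.sphere (0 : ℂ) 1 := fun t => by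
    simp [Complex.norm_exp_ofReal_mul_I]
  have hc : Continuous (fun t : ℝ => g (Complex.exp (t * Complex.I))) :=
    hg.comp_continuous (by fun_prop) hmem
  let ψ : ℝ → ℝ := fun t => ((g (Complex.exp (t * Complex.I)) - t * Complex.I)
    / (2 * Real.pi * Complex.I)).re
  have hψ : Continuous ψ := by
    refine Complex.continuous_re.comp (Continuous.div_const (hc.sub (by fun_prop)) _)
  have hIntg : ∀ t, ∃ n : ℤ, ψ t = n := by
    intro t
    have h1 : Complex.exp (g (Complex.exp (t * Complex.I)) - t * Complex.I) = 1 := by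
      rw [Complex.exp_sub, hgw _ (hmem t), div_self (Complex.exp_ne_zero _)]
    obtain ⟨n, hn⟩ := Complex.exp_eq_one_iff.1 h1
    refine ⟨n, ?_⟩
    simp only [ψ]
    rw [hn, mul_div_assoc, div_self (by simp [Real.pi_ne_zero]), mul_one, Complex.intCast_re]
  have h1 : ψ (2 * Real.pi) = ψ 0 - 1 := by
    have hp : (Real.pi : ℂ) ≠ 0 := by simp [Real.pi_ne_zero]
    have : (g (Complex.exp (((2 * Real.pi : ℝ) : ℂ) * Complex.I)) - ((2 * Real.pi : ℝ) : ℂ) * Complex.I)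
      / (2 * Real.pi * Complex.I) = (g (Complex.exp (((0 : ℝ) : ℂ) * Complex.I))
        - ((0 : ℝ) : ℂ) * Complex.I) / (2 * Real.pi * Complex.I) - 1 := by
      push_cast
      rw [Complex.exp_two_pi_mul_I, zero_mul, Complex.exp_zero]
      field_simp
      ring
    simp only [ψ]
    rw [this, Complex.sub_re, Complex.one_re]
  obtain ⟨t, ht⟩ : ψ 0 - 1 / 2 ∈ range ψ :=
    mem_range_of_exists_le_of_exists_ge hψ ⟨2 * Real.pi, by linarith⟩ ⟨0, by linarith⟩
  obtain ⟨n, hn⟩ := hIntg t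
  obtain ⟨m, hm⟩ := hIntg 0
  have h2 : (2 * n : ℝ) = 2 * m - 1 := by rw [← hn, ← hm, ht]; ring
  have h3 : 2 * n = 2 * m - 1 := by exact_mod_cast h2
  omega

lemma log_circle_transport {h : ℂ → ℂ} (hh : Continuous h) {z₀ : ℂ} (hz : ∀ z, z ≠ z₀ → h z ≠ 0)
    {r R : ℝ} (hr : 0 < r) (hR : 0 < R)
    (hl : HL (Metric.sphere 0 1) (fun w => h (z₀ + R * w))) :
    HL (Metric.sphere 0 1) (fun w => h (z₀ + r * w)) := by
  have hne : ∀ t : ℝ, 0 < t → ∀ w ∈ Metric.sphere (0 : ℂ) 1, h (z₀ + t * w) ≠ 0 := by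
    intro t ht w hw
    apply hz
    have hw0 : w ≠ 0 := fun h => by simp [h] at hw
    simp [ht.ne', hw0]
  refine (isPreconnected_Ioi (a := (0 : ℝ))).induction₂'
    (fun t t' => HL (Metric.sphere 0 1) (fun w => h (z₀ + (t : ℝ) * w)) →
      HL (Metric.sphere 0 1) (fun w => h (z₀ + (t' : ℝ) * w))) ?_
    (fun a b c _ _ _ h1 h2 h => h2 (h1 h)) hR hr hl
  intro t ht
  have hev : ∀ᶠ t' : ℝ in 𝓝 t, ∀ w ∈ Metric.sphere (0 : ℂ) 1,
      3 * ‖h (z₀ + t' * w) - h (z₀ + t * w)‖ < ‖h (z₀ + t * w)‖ := by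
    refine (isCompact_sphere (0 : ℂ) 1).eventually_forall_of_forall_eventually ?_
    intro w hw
    have hc1 : Continuous (fun z : ℝ × ℂ =>
        3 * ‖h (z₀ + z.1 * z.2) - h (z₀ + t * z.2)‖) := by fun_prop
    have hc2 : Continuous (fun z : ℝ × ℂ => ‖h (z₀ + t * z.2)‖) := by fun_prop
    refine (isOpen_lt hc1 hc2).mem_nhds ?_
    simp only [mem_ofPred_eq, sub_self, norm_zero, mul_zero]
    exact norm_pos_iff.2 (hne t ht w hw)
  filter_upwards [nhdsWithin_le_nhds hev, self_mem_nhdsWithin] with t' h1 ht'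
  have c1 : ∀ s : ℝ, ContinuousOn (fun w : ℂ => h (z₀ + s * w)) (Metric.sphere 0 1) :=
    fun s => by fun_prop
  refine ⟨HL.step (c1 t) (c1 t') (hne t ht) ?_, HL.step (c1 t') (c1 t) (hne t' ht') ?_⟩
  · intro w hw
    have := h1 w hw
    have := norm_nonneg (h (z₀ + t' * w) - h (z₀ + t * w))
    linarith
  · intro w hw
    have := h1 w hw
    have h3 := norm_sub_rev (h (z₀ + t' * w)) (h (z₀ + t * w))
    have h4 := norm_sub_norm_le (h (z₀ + t * w)) (h (z₀ + t' * w))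
    linarith

lemma janis {F₁ F₂ : Set ℂ} (h₁c : IsCompact F₁) (h₂c : IsCompact F₂) (h₁ : IsPolyConvex1 F₁)
    (h₂ : IsPolyConvex1 F₂) (hcap : F₁ ∩ F₂ = {0}) : IsPolyConvex1 (F₁ ∪ F₂) := by
  have h01 : (0 : ℂ) ∈ F₁ ∩ F₂ := by rw [hcap]; rfl
  obtain ⟨m1, m2⟩ := h01
  have hFc := h₁c.union h₂c
  have hne : (F₁ ∪ F₂).Nonempty := ⟨0, Or.inl m1⟩
  refine Subset.antisymm ?_ (subset_hull hFc)
  intro z₀ hz₀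
  by_contra hzF
  rw [mem_union, not_or] at hzF
  obtain ⟨g₁, hg₁, he₁⟩ := log_exists h₁c ⟨0, m1⟩ h₁ hzF.1
  obtain ⟨g₂, hg₂, he₂⟩ := log_exists h₂c ⟨0, m2⟩ h₂ hzF.2
  classical
  let g : ℂ → ℂ := fun z => if z ∈ F₁ then g₁ z else g₂ z + (g₁ 0 - g₂ 0)
  have e1 : EqOn g g₁ F₁ := fun z hz => by simp only [g]; rw [if_pos hz]
  have e2 : EqOn g (fun z => g₂ z + (g₁ 0 - g₂ 0)) F₂ := fun z hz => by
    simp only [g]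
    split_ifs with h
    · have : z ∈ F₁ ∩ F₂ := ⟨h, hz⟩
      rw [hcap] at this
      rw [mem_singleton_iff.1 this]; ring
    · rfl
  have hgc : ContinuousOn g (F₁ ∪ F₂) :=
    ContinuousOn.union_of_isClosed (hg₁.congr e1)
      ((hg₂.add continuousOn_const).congr e2) h₁c.isClosed h₂c.isClosed
  have hge : ∀ z ∈ F₁ ∪ F₂, Complex.exp (g z) = z - z₀ := by
    rintro z (hz | hz)
    · rw [e1 hz, he₁ z hz]
    · rw [e2 hz, Complex.exp_add, Complex.exp_sub, he₁ 0 m1, he₂ 0 m2, div_self, mul_one, he₂ z hz]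
      simp only [zero_sub, ne_eq, neg_eq_zero]
      rintro rfl
      exact hzF.1 m1
  obtain ⟨G, hG⟩ := ContinuousMap.exists_restrict_eq hFc.isClosed
    (⟨(F₁ ∪ F₂).domRestrict g, hgc.domRestrict⟩ : C(↑(F₁ ∪ F₂), ℂ))
  have hG' : ∀ z ∈ F₁ ∪ F₂, G z = g z := fun z hz => congrArg (fun f => f ⟨z, hz⟩) hG
  set F := F₁ ∪ F₂ with hFdef
  let U := polyHull1 F \ F
  have hU : IsOpen U := hull_diff_isOpen hne hFc
  have hzU : z₀ ∈ U := ⟨hz₀, by simpa [hFdef] using hzF⟩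
  have hUb : Bornology.IsBounded U := (hull_isBounded hne hFc).subset sdiff_subset
  have hfr : frontier U ⊆ F := by
    intro z hz
    by_contra hzF'
    rw [hU.frontier_eq] at hz
    exact hz.2 ⟨closure_minimal sdiff_subset (hull_isClosed F) hz.1, hzF'⟩
  let h : ℂ → ℂ := fun z => if z ∈ U then (z - z₀) * Complex.exp (-G z) else 1
  have hhc : Continuous h := by
    refine continuous_if (p := fun z => z ∈ U) ?_ ?_ continuousOn_const
    · intro z hz
      have hz' := hfr hz
      rw [Complex.exp_neg, hG' z hz', hge z hz', mul_inv_cancel₀]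
      refine sub_ne_zero.2 ?_
      rintro rfl
      exact hzU.2 hz'
    · fun_prop
  have hhz : ∀ z, z ≠ z₀ → h z ≠ 0 := by
    intro z hz
    simp only [h]
    split_ifs
    · exact mul_ne_zero (sub_ne_zero.2 hz) (Complex.exp_ne_zero _)
    · exact one_ne_zero
  obtain ⟨r, hr, hrU⟩ := Metric.isOpen_iff.1 hU z₀ hzU
  obtain ⟨R, hR, hRU⟩ := hUb.subset_ball_lt 0 z₀
  have hl : HL (Metric.sphere 0 1) (fun w => h (z₀ + R * w)) := by
    refine ⟨fun _ => 0, continuousOn_const, fun w hw => ?_⟩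
    have : z₀ + R * w ∉ U := fun hm => by
      have := hRU hm
      simp only [mem_sphere_iff_norm, sub_zero] at hw
      simp [hw, abs_of_pos hR] at this
    simp only [h]
    rw [if_neg this, Complex.exp_zero]
  obtain ⟨k, hk, hkh⟩ := log_circle_transport hhc hhz (half_pos hr) hR hl
  apply no_log_circle
  refine ⟨fun w => k w + G (z₀ + ((r / 2 : ℝ) : ℂ) * w) - Complex.log ((r / 2 : ℝ) : ℂ), ?_, ?_⟩
  · exact (hk.add (by fun_prop)).sub continuousOn_const
  · intro w hw
    have hm : z₀ + ((r / 2 : ℝ) : ℂ) * w ∈ U := hrU (by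
      simp only [mem_sphere_iff_norm, sub_zero] at hw
      rw [Metric.mem_ball, dist_eq_norm, add_sub_cancel_left, norm_mul, hw, Complex.norm_real,
        Real.norm_eq_abs, abs_of_pos (half_pos hr)]
      linarith)
    have h1 := hkh w hw
    simp only [h] at h1
    rw [if_pos hm] at h1
    have hr0 : ((r / 2 : ℝ) : ℂ) ≠ 0 := by exact_mod_cast (half_pos hr).ne'
    rw [Complex.exp_sub, Complex.exp_add, h1, Complex.exp_log hr0, mul_assoc, ← Complex.exp_add]
    simp only [neg_add_cancel, Complex.exp_zero]
    field_simp
    ring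

open MeasureTheory in
lemma inv_int_small {δ : ℝ} (hδ : 0 < δ) : ∃ c : ENNReal, 0 < c ∧ ∀ S : Set ℂ, volume S < c →
    ∀ ζ : ℂ, ∫⁻ z in S, ENNReal.ofReal ‖z - ζ‖⁻¹ ≤ ENNReal.ofReal δ := by
  have hIntg : IntegrableOn (fun u : ℂ => ‖u‖⁻¹) (Metric.ball 0 1) := by
    refine integrableOn_ball_of_norm_le_rpow (C := 1) (α := 1) (by simp) (by simp) ?_ ?_
    · refine Eventually.of_forall fun x => ?_
      rw [Real.rpow_neg_one]
      simp
    · exact (measurable_norm.inv).aestronglyMeasurable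
  have hfin : ∫⁻ u in Metric.ball (0 : ℂ) 1, ENNReal.ofReal ‖u‖⁻¹ ≠ ⊤ := by
    have := hIntg.lintegral_lt_top
    exact this.ne
  have hδ2 : ENNReal.ofReal (δ / 2) ≠ 0 := by simpa using hδ
  rw [← lintegral_indicator Metric.isOpen_ball.measurableSet] at hfin
  obtain ⟨c, hc, hcs⟩ := exists_pos_setLIntegral_lt_of_measure_lt hfin hδ2
  refine ⟨min c (ENNReal.ofReal (δ / 2)), lt_min hc (pos_iff_ne_zero.2 hδ2), ?_⟩
  intro S hS ζ
  set T : Set ℂ := (fun u => u + ζ) ⁻¹' S with hT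
  have hmp : MeasurePreserving (fun u : ℂ => u + ζ) volume volume :=
    measurePreserving_add_right volume ζ
  have hme : MeasurableEmbedding (fun u : ℂ => u + ζ) := measurableEmbedding_addRight ζ
  have hvT : volume T = volume S := hmp.measure_preimage_emb hme S
  have h1 := hmp.setLIntegral_comp_preimage_emb hme (fun z => ENNReal.ofReal ‖z - ζ‖⁻¹) S
  rw [← h1]
  simp only [add_sub_cancel_right]
  calc ∫⁻ u in T, ENNReal.ofReal ‖u‖⁻¹
      ≤ ∫⁻ u in T, (1 + (Metric.ball (0 : ℂ) 1).indicator (fun u => ENNReal.ofReal ‖u‖⁻¹) u) := by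
        refine lintegral_mono fun u => ?_
        by_cases hu : u ∈ Metric.ball (0 : ℂ) 1
        · simp only [indicator_of_mem hu]
          exact le_add_self
        · simp only [indicator_of_notMem hu, add_zero]
          have : 1 ≤ ‖u‖ := by simpa using hu
          simpa using inv_le_one_of_one_le₀ this
    _ = volume T + ∫⁻ u in T, (Metric.ball (0 : ℂ) 1).indicator
          (fun u => ENNReal.ofReal ‖u‖⁻¹) u := by
        rw [lintegral_add_left measurable_const]
        simp
    _ ≤ ENNReal.ofReal (δ / 2) + ENNReal.ofReal (δ / 2) := by
        gcongr
        · rw [hvT]; exact hS.le.trans (min_le_right _ _)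
        · exact (hcs T (by rw [hvT]; exact hS.trans_le (min_le_left _ _))).le
    _ = ENNReal.ofReal δ := by
        rw [← ENNReal.ofReal_add (by positivity) (by positivity)]; simp

lemma ann_compact (ε : ℝ) : IsCompact (Metric.closedBall (0 : ℂ) (2 * ε) \ Metric.ball 0 ε) :=
  (isCompact_closedBall _ _).diff Metric.isOpen_ball

open MeasureTheory in
lemma area_avg {f : ℂ → ℂ} {J : ℂ} (hf : ContinuousOn f {0}ᶜ)
    (hJ : ∀ r : ℝ, 0 < r → (∮ z in C(0, r), z * f z) = J) {ε : ℝ} (hε : 0 < ε) :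
    ∫ z in Metric.closedBall (0 : ℂ) (2 * ε) \ Metric.ball 0 ε,
      (Complex.I * z ^ 2 / ‖z‖) * f z = ε * J := by
  set A := Metric.closedBall (0 : ℂ) (2 * ε) \ Metric.ball 0 ε with hA
  have hAm : MeasurableSet A := (ann_compact ε).measurableSet
  rw [← integral_indicator hAm, ← Complex.integral_comp_polarCoord_symm]
  let G : ℝ × ℝ → ℂ := fun p => Complex.I * (circleMap 0 p.1 p.2) ^ 2 * f (circleMap 0 p.1 p.2)
  have hsymm : ∀ p : ℝ × ℝ, Complex.polarCoord.symm p = circleMap 0 p.1 p.2 := by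
    intro p
    rw [Complex.polarCoord_symm_apply, circleMap, zero_add, Complex.exp_mul_I]
    push_cast; rfl
  have hmem : ∀ p : ℝ × ℝ, 0 < p.1 → (circleMap 0 p.1 p.2 ∈ A ↔ p.1 ∈ Icc ε (2 * ε)) := by
    intro p hp
    simp [hA, abs_of_pos hp, and_comm]
  have e1 : ∫ p in polarCoord.target, p.1 • A.indicator
      (fun z => (Complex.I * z ^ 2 / ‖z‖) * f z) (Complex.polarCoord.symm p) =
      ∫ p in polarCoord.target, (Icc ε (2 * ε) ×ˢ (univ : Set ℝ)).indicator G p := by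
    refine setIntegral_congr_fun polarCoord.open_target.measurableSet ?_
    rintro p ⟨hp, -⟩
    have hp : 0 < p.1 := hp
    simp only [hsymm]
    by_cases h : p.1 ∈ Icc ε (2 * ε)
    · rw [indicator_of_mem ((hmem p hp).2 h), indicator_of_mem (by simpa using h)]
      simp only [G, norm_circleMap_zero, abs_of_pos hp, Complex.real_smul]
      have : (p.1 : ℂ) ≠ 0 := by exact_mod_cast hp.ne'
      field_simp
    · rw [indicator_of_notMem (fun h' => h ((hmem p hp).1 h')), indicator_of_notMem (by simpa using h)]
      simp
  rw [e1, setIntegral_indicator (measurableSet_Icc.prod MeasurableSet.univ)]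
  have hset : polarCoord.target ∩ Icc ε (2 * ε) ×ˢ univ = Icc ε (2 * ε) ×ˢ Ioo (-Real.pi) Real.pi := by
    ext ⟨r, θ⟩
    simp only [polarCoord_target, mem_inter_iff, mem_prod, mem_Ioi, mem_univ, and_true]
    constructor
    · rintro ⟨⟨-, h⟩, h'⟩; exact ⟨h', h⟩
    · rintro ⟨h', h⟩; exact ⟨⟨hε.trans_le h'.1, h⟩, h'⟩
  rw [hset]
  have hcm : Continuous (fun p : ℝ × ℝ => circleMap 0 p.1 p.2) := by
    unfold circleMap; fun_prop
  have hGc : ContinuousOn G (Icc ε (2 * ε) ×ˢ Icc (-Real.pi) Real.pi) := by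
    refine ContinuousOn.mul (by fun_prop) (hf.comp hcm.continuousOn ?_)
    rintro p ⟨hp, -⟩
    simpa using (hε.trans_le hp.1).ne'
  have hGi : IntegrableOn G (Icc ε (2 * ε) ×ˢ Ioo (-Real.pi) Real.pi) :=
    (hGc.integrableOn_compact (isCompact_Icc.prod isCompact_Icc)).mono_set
      (prod_mono_right Ioo_subset_Icc_self)
  rw [Measure.volume_eq_prod, setIntegral_prod _ hGi]
  have e2 : ∀ r ∈ Icc ε (2 * ε), ∫ θ in Ioo (-Real.pi) Real.pi, G (r, θ) = J := by
    intro r hr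
    have hr0 := hε.trans_le hr.1
    rw [← hJ r hr0, circleIntegral, ← integral_Ioc_eq_integral_Ioo,
      ← intervalIntegral.integral_of_le (by linarith [Real.pi_pos])]
    have hper : Function.Periodic (fun θ => G (r, θ)) (2 * Real.pi) := by
      intro θ
      simp only [G, periodic_circleMap 0 r θ]
    have := hper.intervalIntegral_add_eq (-Real.pi) 0
    rw [show -Real.pi + 2 * Real.pi = Real.pi by ring, zero_add] at this
    rw [this]
    congr 1
    ext θ
    simp only [G, deriv_circleMap, smul_eq_mul]
    ring
  rw [setIntegral_congr_fun measurableSet_Icc e2]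
  simp only [setIntegral_const, Complex.real_smul, Measure.real, Real.volume_Icc]
  rw [ENNReal.toReal_ofReal (by linarith)]
  congr 2; ring

def idc (F : Set ℂ) : C(F, ℂ) := ⟨Subtype.val, continuous_subtype_val⟩

lemma res_mem {F : Set ℂ} [CompactSpace F] {z : ℂ} (hz : z ∉ F) :
    z ∈ resolventSet ℂ (idc F) := by
  have : z ∉ spectrum ℂ (idc F) := by
    rw [ContinuousMap.spectrum_eq_range]
    rintro ⟨x, hx⟩
    exact hz (hx ▸ x.2)
  simpa [spectrum] using this

lemma res_apply {F : Set ℂ} [CompactSpace F] {z : ℂ} (hz : z ∉ F) (x : F) :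
    resolvent (idc F) z x = (z - x)⁻¹ := by
  have h := res_mem hz
  have h1 : resolvent (idc F) z * (algebraMap ℂ C(F, ℂ) z - idc F) = 1 :=
    Ring.inverse_mul_cancel _ h
  have h2 := congrArg (fun g : C(F, ℂ) => g x) h1
  simp only [ContinuousMap.mul_apply, ContinuousMap.sub_apply, ContinuousMap.one_apply,
    algebraMap_apply, smul_eq_mul, mul_one] at h2
  exact eq_inv_of_mul_eq_one_left h2

lemma res_diff {F : Set ℂ} [CompactSpace F] {z : ℂ} (hz : z ∉ F) :
    DifferentiableAt ℂ (resolvent (idc F)) z :=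
  (spectrum.hasDerivAt_resolvent_const_left (res_mem hz)).differentiableAt

lemma res_cont {F S : Set ℂ} [CompactSpace F] (hS : Disjoint S F) :
    ContinuousOn (resolvent (idc F)) S := fun _ hz =>
  (res_diff (Set.disjoint_left.1 hS hz)).continuousAt.continuousWithinAt

open MeasureTheory in
lemma piece_bound {F S S' : Set ℂ} [CompactSpace F] (L : C(F, ℂ) →L[ℂ] ℂ) (hS' : IsCompact S')
    (hSS : S ⊆ S') (hSm : MeasurableSet S) (hd : Disjoint S' F) {w : ℂ → ℂ} (hw : ContinuousOn w S')
    {M δ : ℝ} (hM : 0 ≤ M) (hδ : 0 ≤ δ) (hwM : ∀ z ∈ S, ‖w z‖ ≤ M)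
    (hIntg : ∀ ζ : ℂ, ∫⁻ z in S, ENNReal.ofReal ‖z - ζ‖⁻¹ ≤ ENNReal.ofReal δ) :
    ‖∫ z in S, w z * L (resolvent (idc F) z)‖ ≤ ‖L‖ * (M * δ) := by
  have hφ : IntegrableOn (fun z => w z • resolvent (idc F) z) S :=
    ((hw.smul (res_cont hd)).integrableOn_compact hS').mono_set hSS
  have e1 : ∫ z in S, w z * L (resolvent (idc F) z) =
      L (∫ z in S, w z • resolvent (idc F) z) := by
    rw [← L.integral_comp_comm hφ]
    simp
  rw [e1]
  refine (L.le_opNorm _).trans ?_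
  gcongr
  rw [ContinuousMap.norm_le _ (by positivity)]
  intro x
  have e2 : (∫ z in S, w z • resolvent (idc F) z) x = ∫ z in S, w z * (z - x)⁻¹ := by
    have := (ContinuousMap.evalCLM ℂ x).integral_comp_comm hφ
    simp only [ContinuousMap.evalCLM_apply] at this
    rw [← this]
    refine setIntegral_congr_fun hSm fun z hz => ?_
    simp [res_apply (Set.disjoint_left.1 hd (hSS hz))]
  rw [e2]
  have h3 : ENNReal.ofReal ‖∫ z in S, w z * (z - x)⁻¹‖ ≤ ENNReal.ofReal (M * δ) := by
    calc ENNReal.ofReal ‖∫ z in S, w z * (z - x)⁻¹‖ = ‖∫ z in S, w z * (z - x)⁻¹‖ₑ := by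
          rw [ofReal_norm]
      _ ≤ ∫⁻ z in S, ‖w z * (z - x)⁻¹‖ₑ := enorm_integral_le_lintegral_enorm _
      _ ≤ ∫⁻ z in S, ENNReal.ofReal M * ENNReal.ofReal ‖z - x‖⁻¹ := by
          refine setLIntegral_mono' hSm fun z hz => ?_
          rw [← ofReal_norm, norm_mul, norm_inv, ENNReal.ofReal_mul (norm_nonneg _)]
          gcongr
          exact hwM z hz
      _ = ENNReal.ofReal M * ∫⁻ z in S, ENNReal.ofReal ‖z - x‖⁻¹ :=
          lintegral_const_mul' _ _ ENNReal.ofReal_ne_top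
      _ ≤ ENNReal.ofReal M * ENNReal.ofReal δ := by gcongr; exact hIntg x
      _ = _ := (ENNReal.ofReal_mul hM).symm
  exact (ENNReal.ofReal_le_ofReal_iff (by positivity)).1 h3

open MeasureTheory in
lemma circle_big {F : Set ℂ} [CompactSpace F] (L : C(F, ℂ) →L[ℂ] ℂ) {r : ℝ} (hr : 0 < r)
    (hF : ∀ z ∈ F, ‖z‖ < r) :
    (∮ z in C(0, r), z * L (resolvent (idc F) z)) = 2 * Real.pi * Complex.I * L (idc F) := by
  have hd : Disjoint (Metric.sphere (0 : ℂ) r) F := by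
    rw [Set.disjoint_left]
    intro z hz hzF
    have := hF z hzF
    simp at hz
    linarith
  have hc : ContinuousOn (fun z : ℂ => z • resolvent (idc F) z) (Metric.sphere 0 r) :=
    (continuousOn_id (α := ℂ)).smul (res_cont hd)
  have hci : CircleIntegrable (fun z => z • resolvent (idc F) z) 0 r := hc.circleIntegrable hr.le
  have hI := hci.out
  rw [intervalIntegrable_iff, uIoc_of_le (by positivity)] at hI
  have key : ∀ (T : C(F, ℂ) →L[ℂ] ℂ), (∮ z in C(0, r), z * T (resolvent (idc F) z)) =
      T (∮ z in C(0, r), z • resolvent (idc F) z) := by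
    intro T
    simp only [circleIntegral]
    rw [← T.intervalIntegral_comp_comm hci.out]
    simp
  rw [key]
  have e : (∮ z in C(0, r), z • resolvent (idc F) z) = (2 * Real.pi * Complex.I : ℂ) • idc F := by
    ext x
    have := key (ContinuousMap.evalCLM ℂ x)
    simp only [ContinuousMap.evalCLM_apply] at this
    rw [← this]
    have h2 : (∮ z in C(0, r), z * resolvent (idc F) z x) = ∮ z in C(0, r), (z - x)⁻¹ • z := by
      refine circleIntegral.integral_congr hr.le fun z hz => ?_
      simp only [res_apply (Set.disjoint_left.1 hd hz), smul_eq_mul]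
      ring
    rw [h2, Complex.circleIntegral_sub_inv_smul_of_differentiable_on_off_countable
      (s := ∅) countable_empty]
    · simp [idc]
    · simpa using hF x x.2
    · exact continuousOn_id
    · intro z _; exact differentiableAt_id
  rw [e, map_smul, smul_eq_mul]

open MeasureTheory in
lemma res_vanish {F₁ F₂ : Set ℂ} (h₁ : IsCompact F₁) (h₂ : IsCompact F₂) [CompactSpace F₁]
    [CompactSpace F₂] (hcap : F₁ ∩ F₂ = {0}) (L₁ : C(F₁, ℂ) →L[ℂ] ℂ) (L₂ : C(F₂, ℂ) →L[ℂ] ℂ)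
    (hL : ∀ z, z ∉ F₁ → z ∉ F₂ → L₁ (resolvent (idc F₁) z) = - L₂ (resolvent (idc F₂) z)) :
    L₁ (idc F₁) = 0 := by
  classical
  have h01 : (0 : ℂ) ∈ F₁ ∩ F₂ := by rw [hcap]; rfl
  obtain ⟨m1, m2⟩ := h01
  let f : ℂ → ℂ := fun z => if z ∈ F₁ then - L₂ (resolvent (idc F₂) z) else
    L₁ (resolvent (idc F₁) z)
  have f1 : ∀ z, z ∉ F₁ → f z = L₁ (resolvent (idc F₁) z) := fun z hz => by
    simp only [f]; rw [if_neg hz]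
  have f2 : ∀ z, z ∉ F₂ → f z = - L₂ (resolvent (idc F₂) z) := fun z hz => by
    simp only [f]
    split_ifs with h
    · rfl
    · exact hL z h hz
  have hfd : ∀ z, z ≠ 0 → DifferentiableAt ℂ f z := by
    intro z hz
    by_cases h : z ∈ F₁
    · have h' : z ∉ F₂ := fun h' => hz (by
        have : z ∈ F₁ ∩ F₂ := ⟨h, h'⟩
        rwa [hcap] at this)
      have hd : DifferentiableAt ℂ (fun z => - L₂ (resolvent (idc F₂) z)) z :=
        (L₂.differentiableAt.comp z (res_diff h')).neg
      refine hd.congr_of_eventuallyEq ?_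
      filter_upwards [h₂.isClosed.isOpen_compl.mem_nhds h'] with y hy using f2 y hy
    · have hd : DifferentiableAt ℂ (fun z => L₁ (resolvent (idc F₁) z)) z :=
        L₁.differentiableAt.comp z (res_diff h)
      refine hd.congr_of_eventuallyEq ?_
      filter_upwards [h₁.isClosed.isOpen_compl.mem_nhds h] with y hy using f1 y hy
  have hfc : ContinuousOn f {0}ᶜ := fun z hz => (hfd z hz).continuousAt.continuousWithinAt
  obtain ⟨R, hR0, hR⟩ := h₁.isBounded.exists_pos_norm_lt
  have hmono : ∀ r s : ℝ, 0 < r → r ≤ s →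
      (∮ z in C(0, s), z * f z) = ∮ z in C(0, r), z * f z := by
    intro r s hr hrs
    have hne : ∀ z, z ∉ Metric.ball (0 : ℂ) r → z ≠ 0 := by
      rintro z hz rfl
      exact hz (Metric.mem_ball_self hr)
    refine Complex.circleIntegral_eq_of_differentiable_on_annulus_off_countable hr hrs
      countable_empty ?_ ?_
    · exact continuousOn_id.mul (hfc.mono fun z hz => hne z hz.2)
    · rintro z ⟨⟨-, hz⟩, -⟩
      exact differentiableAt_id.mul (hfd z (hne z fun h => hz (Metric.ball_subset_closedBall h)))
  have hJR : (∮ z in C(0, R), z * f z) = 2 * Real.pi * Complex.I * L₁ (idc F₁) := by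
    rw [← circle_big L₁ hR0 hR]
    refine circleIntegral.integral_congr hR0.le fun z hz => ?_
    rw [f1 z]
    intro hzF
    have := hR z hzF
    simp at hz
    linarith
  have hJ : ∀ r : ℝ, 0 < r → (∮ z in C(0, r), z * f z) = 2 * Real.pi * Complex.I * L₁ (idc F₁) := by
    intro r hr
    rw [← hJR]
    rcases le_total r R with h | h
    · exact (hmono r R hr h).symm
    · exact hmono R r hR0 h
  by_contra hne
  set J := 2 * Real.pi * Complex.I * L₁ (idc F₁) with hJdef
  have hJ0 : J ≠ 0 := by
    rw [hJdef]
    exact mul_ne_zero Complex.two_pi_I_ne_zero hne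
  have hJpos : 0 < ‖J‖ := norm_pos_iff.2 hJ0
  have hN1 := norm_nonneg L₁
  have hN2 := norm_nonneg L₂
  set δ := ‖J‖ / (4 * (‖L₁‖ + ‖L₂‖ + 1)) with hδdef
  have hδ : 0 < δ := by positivity
  obtain ⟨c, hc, hcS⟩ := inv_int_small hδ
  obtain ⟨ε, hε, hεc⟩ : ∃ ε : ℝ, 0 < ε ∧ volume (Metric.closedBall (0 : ℂ) (2 * ε)) < c := by
    have hcont : Continuous (fun ε : ℝ => ENNReal.ofReal (2 * ε) ^ 2 * ENNReal.ofReal Real.pi) := by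
      have h1 : Continuous (fun ε : ℝ => ENNReal.ofReal ((2 * ε))) :=
        ENNReal.continuous_ofReal.comp (by fun_prop)
      exact (ENNReal.continuous_mul_const ENNReal.ofReal_ne_top).comp
        ((ENNReal.continuous_pow 2).comp h1)
    have h0 : (fun ε : ℝ => ENNReal.ofReal (2 * ε) ^ 2 * ENNReal.ofReal Real.pi) 0 < c := by
      simpa using hc
    have h1 := (isOpen_lt hcont continuous_const).mem_nhds h0
    obtain ⟨e, he, hb⟩ := Metric.mem_nhds_iff.1 h1
    refine ⟨e / 2, half_pos he, ?_⟩
    have := hb (show e / 2 ∈ Metric.ball (0 : ℝ) e by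
      simp [abs_of_pos he]; linarith)
    rw [Complex.volume_closedBall]
    convert! this using 2
    rw [← NNReal.coe_real_pi, ENNReal.ofReal_coe_nnreal]
    exact Iff.rfl
  set A := Metric.closedBall (0 : ℂ) (2 * ε) \ Metric.ball 0 ε with hA
  have hAc : IsCompact A := ann_compact ε
  have hA0 : ∀ z ∈ A, z ≠ 0 := by
    rintro z hz rfl
    exact hz.2 (Metric.mem_ball_self hε)
  have hAint : ∀ S ⊆ A, ∀ ζ : ℂ, ∫⁻ z in S, ENNReal.ofReal ‖z - ζ‖⁻¹ ≤ ENNReal.ofReal δ :=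
    fun S hS => hcS S ((measure_mono (hS.trans sdiff_subset)).trans_lt hεc)
  let w : ℂ → ℂ := fun z => Complex.I * z ^ 2 / ‖z‖
  have hw : ContinuousOn w A := by
    refine ContinuousOn.div (by fun_prop) (by fun_prop) ?_
    intro z hz
    simpa using hA0 z hz
  have hwM : ∀ z ∈ A, ‖w z‖ ≤ 2 * ε := by
    intro z hz
    have h1 : ‖z‖ ≤ 2 * ε := by simpa using hz.1
    have h2 : 0 < ‖z‖ := norm_pos_iff.2 (hA0 z hz)
    simp only [w, norm_div, norm_mul, Complex.norm_I, one_mul, norm_pow, Complex.norm_real,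
      norm_norm]
    rw [pow_two, mul_div_assoc, div_self h2.ne', mul_one]
    exact h1
  let T₁ : Set ℂ := {z | Metric.infDist z F₂ ≤ Metric.infDist z F₁}
  let T₂ : Set ℂ := {z | Metric.infDist z F₁ ≤ Metric.infDist z F₂}
  have hT₁ : IsClosed T₁ :=
    isClosed_le (Metric.continuous_infDist_pt _) (Metric.continuous_infDist_pt _)
  have hT₂ : IsClosed T₂ :=
    isClosed_le (Metric.continuous_infDist_pt _) (Metric.continuous_infDist_pt _)
  have hz12 : ∀ z ∈ A, z ∈ F₁ → z ∈ F₂ → False := by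
    intro z hz h h'
    have : z ∈ F₁ ∩ F₂ := ⟨h, h'⟩
    rw [hcap] at this
    exact hA0 z hz this
  have hd1 : Disjoint (A ∩ T₁) F₁ := by
    rw [Set.disjoint_left]
    rintro z ⟨hzA, hzT⟩ hz
    refine hz12 z hzA hz ((h₂.isClosed.mem_iff_infDist_zero ⟨0, m2⟩).2 ?_)
    have h1 : Metric.infDist z F₂ ≤ Metric.infDist z F₁ := hzT
    rw [Metric.infDist_zero_of_mem hz] at h1
    exact le_antisymm h1 Metric.infDist_nonneg
  have hd2 : Disjoint (A ∩ T₂) F₂ := by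
    rw [Set.disjoint_left]
    rintro z ⟨hzA, hzT⟩ hz
    refine hz12 z hzA ((h₁.isClosed.mem_iff_infDist_zero ⟨0, m1⟩).2 ?_) hz
    have h1 : Metric.infDist z F₁ ≤ Metric.infDist z F₂ := hzT
    rw [Metric.infDist_zero_of_mem hz] at h1
    exact le_antisymm h1 Metric.infDist_nonneg
  have hsub : A \ T₁ ⊆ A ∩ T₂ := by
    rintro z ⟨hz, hzT⟩
    have h : ¬ Metric.infDist z F₂ ≤ Metric.infDist z F₁ := hzT
    exact ⟨hz, show Metric.infDist z F₁ ≤ Metric.infDist z F₂ from (not_le.1 h).le⟩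
  have hb1 := piece_bound L₁ (hAc.inter_right hT₁) Subset.rfl
    (hAc.inter_right hT₁).measurableSet hd1 (hw.mono inter_subset_left) (M := 2 * ε) (by positivity)
    hδ.le (fun z hz => hwM z hz.1) (hAint _ inter_subset_left)
  have hb2 := piece_bound L₂ (hAc.inter_right hT₂) hsub
    (hAc.measurableSet.diff hT₁.measurableSet) hd2 (hw.mono inter_subset_left) (M := 2 * ε)
    (by positivity) hδ.le (fun z hz => hwM z hz.1) (hAint _ sdiff_subset)
  have havg := area_avg hfc hJ hε
  have hIntg : IntegrableOn (fun z => w z * f z) A :=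
    (hw.mul (hfc.mono fun z hz => hA0 z hz)).integrableOn_compact hAc
  have hsplit := integral_inter_add_sdiff hT₁.measurableSet hIntg
  have e1 : ∫ z in A ∩ T₁, w z * f z = ∫ z in A ∩ T₁, w z * L₁ (resolvent (idc F₁) z) := by
    refine setIntegral_congr_fun (hAc.inter_right hT₁).measurableSet fun z hz => ?_
    rw [f1 z (Set.disjoint_left.1 hd1 hz)]
  have e2 : ∫ z in A \ T₁, w z * f z = - ∫ z in A \ T₁, w z * L₂ (resolvent (idc F₂) z) := by
    rw [← integral_neg]
    refine setIntegral_congr_fun (hAc.measurableSet.diff hT₁.measurableSet) fun z hz => ?_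
    rw [f2 z (Set.disjoint_left.1 hd2 (hsub hz))]
    ring
  have hfin : ε * ‖J‖ ≤ ‖L₁‖ * (2 * ε * δ) + ‖L₂‖ * (2 * ε * δ) := by
    calc ε * ‖J‖ = ‖(ε : ℂ) * J‖ := by
          rw [norm_mul (ε : ℂ) J, Complex.norm_real, Real.norm_eq_abs, abs_of_pos hε]
      _ = ‖∫ z in A, w z * f z‖ := by rw [← havg]
      _ ≤ _ := by
          rw [← hsplit, e1, e2]
          refine (norm_add_le _ _).trans ?_
          rw [norm_neg]
          exact add_le_add hb1 hb2
  have h5 : ‖J‖ ≤ 2 * δ * (‖L₁‖ + ‖L₂‖) := by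
    refine le_of_mul_le_mul_left (hfin.trans_eq ?_) hε
    ring
  have h6 : ‖J‖ = 4 * δ * (‖L₁‖ + ‖L₂‖ + 1) := by
    rw [hδdef]; field_simp
  nlinarith

lemma separation {F₁ F₂ : Set ℂ} (h₁ : IsCompact F₁) (h₂ : IsCompact F₂)
    (hcap : F₁ ∩ F₂ = {0}) (hpc : IsPolyConvex1 (F₁ ∪ F₂)) {ε : ℝ} (hε : 0 < ε) :
    ∃ q : Polynomial ℂ, (∀ z ∈ F₁, ‖q.eval z - z‖ ≤ ε) ∧ ∀ z ∈ F₂, ‖q.eval z‖ ≤ ε := by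
  have : CompactSpace F₁ := isCompact_iff_compactSpace.1 h₁
  have : CompactSpace F₂ := isCompact_iff_compactSpace.1 h₂
  let Φ : Polynomial ℂ →ₗ[ℂ] C(F₁, ℂ) × C(F₂, ℂ) :=
    (Polynomial.toContinuousMapOnAlgHom F₁).toLinearMap.prod
      (Polynomial.toContinuousMapOnAlgHom F₂).toLinearMap
  have hΦ1 : ∀ q (x : F₁), (Φ q).1 x = q.eval (x : ℂ) := fun q x => rfl
  have hΦ2 : ∀ q (x : F₂), (Φ q).2 x = q.eval (x : ℂ) := fun q x => rfl
  let W := (LinearMap.range Φ).topologicalClosure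
  have hWc : ∀ g : C(F₁, ℂ) × C(F₂, ℂ), g ∈ W ↔ ∀ ε > 0, ∃ q, ‖g - Φ q‖ < ε := by
    intro g
    have : g ∈ W ↔ g ∈ closure (range Φ) := Iff.rfl
    rw [this, Metric.mem_closure_range_iff]
    simp only [dist_eq_norm]
  suffices hmem : (idc F₁, (0 : C(F₂, ℂ))) ∈ W by
    obtain ⟨q, hq⟩ := (hWc _).1 hmem ε hε
    refine ⟨q, fun z hz => ?_, fun z hz => ?_⟩
    · have h1 := (norm_fst_le _).trans hq.le
      have h2 := (ContinuousMap.norm_coe_le_norm _ (⟨z, hz⟩ : F₁)).trans h1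
      rw [norm_sub_rev]
      exact h2
    · have h1 := (norm_snd_le _).trans hq.le
      have h2 := (ContinuousMap.norm_coe_le_norm _ (⟨z, hz⟩ : F₂)).trans h1
      have h3 : ‖(0 : ℂ) - q.eval z‖ ≤ ε := h2
      simpa using h3
  by_contra hnot
  obtain ⟨L, u, hLu, huL⟩ := RCLike.geometric_hahn_banach_closed_point (𝕜 := ℂ)
    (s := (W : Set (C(F₁, ℂ) × C(F₂, ℂ)))) (W.restrictScalars ℝ).convex
    (Submodule.isClosed_topologicalClosure _) hnot
  have hu0 : 0 < u := by simpa using hLu 0 W.zero_mem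
  have hL0 : ∀ a ∈ W, L a = 0 := by
    intro a ha
    by_contra hne
    have h1 := hLu (((u : ℂ) / L a) • a) (W.smul_mem _ ha)
    rw [map_smul, smul_eq_mul, div_mul_cancel₀ _ hne] at h1
    simp at h1
  let L₁ : C(F₁, ℂ) →L[ℂ] ℂ := L.comp (ContinuousLinearMap.inl ℂ _ _)
  let L₂ : C(F₂, ℂ) →L[ℂ] ℂ := L.comp (ContinuousLinearMap.inr ℂ _ _)
  have hsum : ∀ a b, L (a, b) = L₁ a + L₂ b := by
    intro a b
    simp only [L₁, L₂, ContinuousLinearMap.comp_apply, ContinuousLinearMap.inl_apply,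
      ContinuousLinearMap.inr_apply]
    rw [← map_add]; simp
  have hv := res_vanish h₁ h₂ hcap L₁ L₂ (by
    intro z hz1 hz2
    have hzF : z ∉ F₁ ∪ F₂ := fun h => h.elim hz1 hz2
    have hpa := PA.inv (h₁.union h₂) (by rw [hpc]; exact hzF) hzF
    rw [← add_eq_zero_iff_eq_neg, ← hsum]
    apply hL0
    rw [hWc]
    intro e he
    obtain ⟨q, hq⟩ := hpa (e / 2) (half_pos he)
    refine ⟨-q, lt_of_le_of_lt ?_ (half_lt_self he)⟩
    rw [Prod.norm_def, max_le_iff]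
    constructor
    · rw [ContinuousMap.norm_le _ (by positivity)]
      intro x
      have := hq x (Or.inl x.2)
      have e : (resolvent (idc F₁) z) x - (-q).eval (x : ℂ) = -((x - z : ℂ)⁻¹ - q.eval (x : ℂ)) := by
        rw [res_apply hz1, Polynomial.eval_neg, ← neg_sub (x : ℂ) z, inv_neg]; ring
      change ‖(resolvent (idc F₁) z) x - (-q).eval (x : ℂ)‖ ≤ _
      rw [e, norm_neg]; exact this
    · rw [ContinuousMap.norm_le _ (by positivity)]
      intro x
      have := hq x (Or.inr x.2)
      have e : (resolvent (idc F₂) z) x - (-q).eval (x : ℂ) = -((x - z : ℂ)⁻¹ - q.eval (x : ℂ)) := by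
        rw [res_apply hz2, Polynomial.eval_neg, ← neg_sub (x : ℂ) z, inv_neg]; ring
      change ‖(resolvent (idc F₂) z) x - (-q).eval (x : ℂ)‖ ≤ _
      rw [e, norm_neg]; exact this)
  have : L (idc F₁, 0) = 0 := by rw [hsum, hv]; simp
  rw [this] at huL
  simp at huL
  linarith

lemma mvEval_cont {n : ℕ} (p : MvPolynomial (Fin n) ℂ) : Continuous (mvEval p) :=
  MvPolynomial.continuous_eval p

lemma mvEval_aeval {n : ℕ} (p : MvPolynomial (Fin n) ℂ) (q : Polynomial ℂ) (y : Fin n → ℂ) :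
    mvEval (Polynomial.aeval p q) y = q.eval (mvEval p y) := by
  induction q using Polynomial.induction_on' with
  | add a b ha hb =>
    simp only [mvEval] at ha hb ⊢
    rw [map_add, map_add, Polynomial.eval_add, ha, hb]
  | monomial k a => simp [mvEval, Polynomial.aeval_monomial, MvPolynomial.algebraMap_eq]

lemma hullN_bound {n : ℕ} {K : Set (Fin n → ℂ)} (hK : K.Nonempty) {x : Fin n → ℂ}
    (hx : x ∈ polyHull K) (r : MvPolynomial (Fin n) ℂ) {s : ℝ} (h : ∀ y ∈ K, ‖mvEval r y‖ ≤ s) :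
    ‖mvEval r x‖ ≤ s := by
  refine (hx r).trans (csSup_le (hK.image _) ?_)
  rintro _ ⟨y, hy, rfl⟩
  exact h y hy

lemma le_sup_of_mem {n : ℕ} {K : Set (Fin n → ℂ)} (hK : IsCompact K) (r : MvPolynomial (Fin n) ℂ)
    {y : Fin n → ℂ} (hy : y ∈ K) : ‖mvEval r y‖ ≤ sSup ((fun w => ‖mvEval r w‖) '' K) :=
  le_csSup (hK.image (mvEval_cont r).norm).bddAbove (mem_image_of_mem _ hy)

lemma amplify {n : ℕ} {K : Set (Fin n → ℂ)} (hKc : IsCompact K) (hK : K.Nonempty)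
    {x : Fin n → ℂ} (hx : x ∈ polyHull K) (p r : MvPolynomial (Fin n) ℂ) (Y : Set (Fin n → ℂ))
    {A c M : ℝ} (hA : 0 ≤ A) (hc : 0 < c) (hM : 0 ≤ M) (hY : ∀ y ∈ K, y ∈ Y → ‖mvEval r y‖ ≤ A)
    (hq : ∀ ε > 0, ∃ q : Polynomial ℂ, c ≤ ‖q.eval (mvEval p x)‖ ∧
      (∀ y ∈ K, y ∈ Y → ‖q.eval (mvEval p y)‖ ≤ M) ∧
      ∀ y ∈ K, y ∉ Y → ‖q.eval (mvEval p y)‖ ≤ ε) : ‖mvEval r x‖ ≤ A := by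
  by_contra hlt
  rw [not_le] at hlt
  set B := ‖mvEval r x‖ with hB
  have hB0 : 0 < B := hA.trans_lt hlt
  obtain ⟨m, hm⟩ := exists_pow_lt_of_lt_one (show 0 < c / (M + 1) by positivity)
    ((div_lt_one hB0).2 hlt)
  have hBm : 0 < B ^ m := by positivity
  have h1 : A ^ m * M < c * B ^ m := by
    rw [div_pow, div_lt_div_iff₀ hBm (by positivity)] at hm
    have : 0 ≤ A ^ m := by positivity
    nlinarith
  obtain ⟨C, hC⟩ := hKc.exists_bound_of_continuousOn (mvEval_cont r).continuousOn
  have hC0 : 0 ≤ C := by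
    obtain ⟨y, hy⟩ := hK
    exact (norm_nonneg _).trans (hC y hy)
  obtain ⟨q, hq1, hq2, hq3⟩ := hq (c * B ^ m / (2 * (C ^ m + 1))) (by positivity)
  have h2 : C ^ m * (c * B ^ m / (2 * (C ^ m + 1))) < c * B ^ m := by
    rw [mul_div_assoc', div_lt_iff₀ (by positivity)]
    have h3 : 0 ≤ C ^ m := by positivity
    have h4 : 0 < c * B ^ m := by positivity
    nlinarith
  have hev : ∀ y, ‖mvEval (r ^ m * Polynomial.aeval p q) y‖ =
      ‖mvEval r y‖ ^ m * ‖q.eval (mvEval p y)‖ := by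
    intro y
    rw [← mvEval_aeval]
    simp [mvEval]
  have h5 := hullN_bound hK hx (r ^ m * Polynomial.aeval p q)
    (s := max (A ^ m * M) (C ^ m * (c * B ^ m / (2 * (C ^ m + 1))))) (by
      intro y hy
      rw [hev]
      by_cases hyY : y ∈ Y
      · refine le_max_of_le_left ?_
        gcongr
        · exact hY y hy hyY
        · exact hq2 y hy hyY
      · refine le_max_of_le_right ?_
        gcongr
        · exact hC y hy
        · exact hq3 y hy hyY)
  rw [hev] at h5
  have h6 : c * B ^ m ≤ ‖mvEval r x‖ ^ m * ‖q.eval (mvEval p x)‖ := by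
    rw [mul_comm]; gcongr
  exact absurd (h6.trans h5) (not_le.2 (max_lt h1 h2))

lemma frontier_union {F₁ F₂ : Set ℂ} (h₁ : IsClosed F₁) (h₂ : IsClosed F₂) (hcap : F₁ ∩ F₂ = {0})
    (h0₁ : (0 : ℂ) ∈ frontier F₁) (h0₂ : (0 : ℂ) ∈ frontier F₂) : (0 : ℂ) ∈ frontier (F₁ ∪ F₂) := by
  have h01 : (0 : ℂ) ∈ F₁ ∩ F₂ := by rw [hcap]; rfl
  refine ⟨subset_closure (Or.inl h01.1), fun hIntg => ?_⟩
  obtain ⟨r, hr, hb⟩ := Metric.mem_nhds_iff.1 (mem_interior_iff_mem_nhds.1 hIntg)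
  have hconv : Convex ℝ {z : ℂ | z.re < Real.log r} := convex_halfSpace_re_lt _
  have hpre := hconv.isPreconnected.image Complex.exp Complex.continuous_exp.continuousOn
  have hsub : Complex.exp '' {z : ℂ | z.re < Real.log r} ⊆ F₁ ∪ F₂ := by
    rintro _ ⟨z, hz, rfl⟩
    apply hb
    have hz : z.re < Real.log r := hz
    rw [mem_ball_zero_iff, Complex.norm_exp]
    exact (Real.lt_log_iff_exp_lt hr).1 hz
  have hball : ∀ F : Set ℂ, (0 : ℂ) ∈ F → Complex.exp '' {z : ℂ | z.re < Real.log r} ⊆ F →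
      (0 : ℂ) ∈ interior F := by
    intro F h0 hF
    refine mem_interior_iff_mem_nhds.2 (Metric.mem_nhds_iff.2 ⟨r, hr, fun z hz => ?_⟩)
    by_cases hz0 : z = 0
    · rw [hz0]; exact h0
    · apply hF
      refine ⟨Complex.log z, ?_, Complex.exp_log hz0⟩
      rw [mem_ball_zero_iff] at hz
      simp only [mem_ofPred_eq, Complex.log_re]
      exact Real.log_lt_log (norm_pos_iff.2 hz0) hz
  rcases isPreconnected_iff_subset_of_disjoint_closed.1 hpre F₁ F₂ h₁ h₂ hsub (by
    rw [hcap]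
    ext z
    simp only [mem_inter_iff, mem_image, mem_singleton_iff, mem_empty_iff_false, iff_false]
    rintro ⟨⟨y, -, rfl⟩, h⟩
    exact Complex.exp_ne_zero y h) with h | h
  · exact h0₁.2 (hball F₁ h01.1 h)
  · exact h0₂.2 (hball F₂ h01.2 h)

lemma kallin_half {n : ℕ} {K₁ K₂ : Set (Fin n → ℂ)} (hK₁ : IsCompact K₁) (hK₂ : IsCompact K₂)
    (hpc : IsPolyConvex K₁) (p : MvPolynomial (Fin n) ℂ)
    (hc1 : IsCompact (mvEval p '' K₁)) (hc2 : IsCompact (mvEval p '' K₂))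
    (hcap : mvEval p '' K₁ ∩ mvEval p '' K₂ = {0})
    (hU : IsPolyConvex1 (mvEval p '' K₁ ∪ mvEval p '' K₂)) {x : Fin n → ℂ}
    (hx : x ∈ polyHull (K₁ ∪ K₂)) (hw0 : mvEval p x ≠ 0) (hw : mvEval p x ∈ mvEval p '' K₁) :
    x ∈ K₁ := by
  rw [← hpc]
  intro r
  have hne : (K₁ ∪ K₂).Nonempty := by
    obtain ⟨y, hy, -⟩ := hw
    exact ⟨y, Or.inl hy⟩
  obtain ⟨C, hC⟩ := hc1.exists_bound_of_continuousOn continuousOn_id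
  have hC0 : 0 ≤ C := (norm_nonneg _).trans (hC _ hw)
  have hwpos : 0 < ‖mvEval p x‖ := norm_pos_iff.2 hw0
  refine amplify (hK₁.union hK₂) hne hx p r K₁ (c := ‖mvEval p x‖ / 2)
    (M := C + ‖mvEval p x‖ / 2) ?_ (by positivity) (by positivity) ?_ ?_
  · refine Real.sSup_nonneg ?_
    rintro _ ⟨y, -, rfl⟩
    exact norm_nonneg _
  · intro y _ hy
    exact le_sup_of_mem hK₁ r hy
  · intro ε hε
    obtain ⟨q, hq1, hq2⟩ := separation hc1 hc2 hcap hU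
      (lt_min hε (half_pos hwpos))
    refine ⟨q, ?_, ?_, ?_⟩
    · have h1 := (hq1 _ hw).trans (min_le_right _ _)
      have h2 := norm_sub_norm_le (mvEval p x) (q.eval (mvEval p x))
      rw [norm_sub_rev] at h2
      linarith
    · intro y _ hy
      have hm : mvEval p y ∈ mvEval p '' K₁ := mem_image_of_mem _ hy
      have h1 := (hq1 _ hm).trans (min_le_right _ _)
      have h2 := norm_sub_norm_le (q.eval (mvEval p y)) (mvEval p y)
      have h3 := hC _ hm
      simp only [id] at h3
      linarith
    · intro y hy hy1
      exact (hq2 _ (mem_image_of_mem _ (hy.resolve_left hy1))).trans (min_le_left _ _)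

/-- Kallin's Lemma. -/
theorem kallin_lemma (n : ℕ) (K₁ K₂ : Set (Fin n → ℂ))
    (hK₁cpt : IsCompact K₁) (hK₁pc : IsPolyConvex K₁)
    (hK₂cpt : IsCompact K₂) (hK₂pc : IsPolyConvex K₂)
    (p : MvPolynomial (Fin n) ℂ) (F₁ F₂ : Set ℂ)
    (hF₁ : F₁ = mvEval p '' K₁) (hF₂ : F₂ = mvEval p '' K₂)
    (hF₁cpt : IsCompact F₁) (hF₂cpt : IsCompact F₂)
    (hF₁pc : IsPolyConvex1 F₁) (hF₂pc : IsPolyConvex1 F₂)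
    (hcap : F₁ ∩ F₂ = {0}) (h0₁ : (0 : ℂ) ∈ frontier F₁) (h0₂ : (0 : ℂ) ∈ frontier F₂)
    (hfiber : IsPolyConvex ({z | mvEval p z = 0} ∩ (K₁ ∪ K₂))) :
    IsPolyConvex (K₁ ∪ K₂) := by
  have hU : IsPolyConvex1 (F₁ ∪ F₂) := janis hF₁cpt hF₂cpt hF₁pc hF₂pc hcap
  have hfr := frontier_union hF₁cpt.isClosed hF₂cpt.isClosed hcap h0₁ h0₂
  have h01 : (0 : ℂ) ∈ F₁ ∩ F₂ := by rw [hcap]; rfl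
  have hKc := hK₁cpt.union hK₂cpt
  refine Subset.antisymm ?_ (fun x hx r => le_sup_of_mem hKc r hx)
  intro x hx
  subst hF₁ hF₂
  have hw : mvEval p x ∈ mvEval p '' K₁ ∪ mvEval p '' K₂ := by
    rw [← hU]
    intro q
    have h := hx (Polynomial.aeval p q)
    simp only [mvEval_aeval] at h
    rw [← image_union, image_image]
    exact h
  by_cases hw0 : mvEval p x = 0
  · obtain ⟨⟨y₀, hy₀, hpy₀⟩, -⟩ := h01
    have hne : (K₁ ∪ K₂).Nonempty := ⟨y₀, Or.inl hy₀⟩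
    suffices hxZ : x ∈ polyHull ({z | mvEval p z = 0} ∩ (K₁ ∪ K₂)) by
      rw [hfiber] at hxZ
      exact hxZ.2
    have hZc : IsCompact ({z | mvEval p z = 0} ∩ (K₁ ∪ K₂)) :=
      hKc.inter_left (isClosed_eq (mvEval_cont p) continuous_const)
    intro r
    refine le_of_forall_gt_imp_ge_of_dense fun A hA => ?_
    have hA0 : 0 ≤ A := by
      refine le_trans (Real.sSup_nonneg ?_) hA.le
      rintro _ ⟨y, -, rfl⟩
      exact norm_nonneg _
    have hK' : IsCompact ((K₁ ∪ K₂) ∩ {y | A ≤ ‖mvEval r y‖}) :=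
      hKc.inter_right (isClosed_le continuous_const (mvEval_cont r).norm)
    obtain ⟨ρ, hρ, hρK⟩ := hK'.exists_forall_le' (f := fun y => ‖mvEval p y‖)
      (mvEval_cont p).norm.continuousOn (a := 0) (by
        rintro y ⟨hyK, hyA⟩
        have hyA : A ≤ ‖mvEval r y‖ := hyA
        rw [norm_pos_iff]
        intro h0
        have := le_sup_of_mem hZc r (y := y) ⟨h0, hyK⟩
        linarith)
    refine amplify hKc hne hx p r {y | ‖mvEval p y‖ < ρ} (c := 1 / 2) (M := 770) hA0
      (by norm_num) (by norm_num) ?_ ?_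
    · intro y hy hyY
      by_contra hlt
      have h1 := hρK y ⟨hy, (not_le.1 hlt).le⟩
      have h2 : ‖mvEval p y‖ < ρ := hyY
      linarith
    · intro ε hε
      obtain ⟨q, hq1, hq2, hq3⟩ := peak (hF₁cpt.union hF₂cpt) hU hfr hρ hε
      have hm : ∀ y ∈ K₁ ∪ K₂, mvEval p y ∈ mvEval p '' K₁ ∪ mvEval p '' K₂ := by
        intro y hy
        rw [← image_union]
        exact mem_image_of_mem _ hy
      refine ⟨q, by rw [hw0]; exact hq1, fun y hy _ => hq2 _ (hm y hy), fun y hy hyY => ?_⟩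
      exact hq3 _ (hm y hy) (not_lt.1 hyY)
  · rcases hw with h | h
    · exact Or.inl (kallin_half hK₁cpt hK₂cpt hK₁pc p hF₁cpt hF₂cpt hcap hU hx hw0 h)
    · refine Or.inr (kallin_half hK₂cpt hK₁cpt hK₂pc p hF₂cpt hF₁cpt ?_ ?_ ?_ hw0 h)
      · rw [inter_comm]; exact hcap
      · rw [union_comm]; exact hU
      · rw [union_comm]; exact hx

end
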